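/- arXiv:2605.20527 — 5 statements merged into one kernel-verified Lean document; each statement's English description precedes it below -/
import Mathlib

section
/- Let N ≥ 1 and L ≥ 1 be integers satisfying 1343 L² ≤ N². For any complex numbers b₀, …, b_{L−1}, the trigonometric polynomial P(t) = Σ_{m=0}^{L−1} b_m e^{i(N+m)t} satisfies ‖P‖_{L²(S¹)}² ≤ 32 ‖ρ ∘ P‖_{L²(S¹)}², where the L² norms are taken with respect to the probability Haar measure dσ = dt/(2π) on the circle. -/
open MeasureTheory

/-- The defect function `ρ(w) = ||1+w| − 1|`. -/
noncomputable def ρ (w : ℂ) : ℝ := |‖1 + w‖ - 1|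

/-- Average over the circle with respect to the probability Haar measure `dσ = dt/(2π)`. -/
noncomputable def circleAvg (f : ℝ → ℝ) : ℝ :=
  (1 / (2 * Real.pi)) * ∫ t in (0 : ℝ)..(2 * Real.pi), f t

/-- The trigonometric polynomial with coefficients `c`. -/
noncomputable def trigP (N L : ℕ) (c : ℕ → ℂ) (t : ℝ) : ℂ :=
  ∑ m ∈ Finset.range L, c m * Complex.exp (((N + m : ℕ) : ℂ) * (t : ℂ) * Complex.I)

lemma trigP_cont (N L : ℕ) (c : ℕ → ℂ) : Continuous (trigP N L c) := by
  unfold trigP; fun_prop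

lemma rho_cont : Continuous ρ := by
  unfold ρ; fun_prop

lemma trigP_periodic (N L : ℕ) (c : ℕ → ℂ) : Function.Periodic (trigP N L c) (2 * Real.pi) := by
  intro t
  unfold trigP
  refine Finset.sum_congr rfl fun m _ => ?_
  congr 1
  rw [Complex.exp_eq_exp_iff_exists_int]
  refine ⟨((N + m : ℕ) : ℤ), ?_⟩
  push_cast
  ring

lemma int_exp (m n : ℕ) :
    ∫ t in (0 : ℝ)..(2 * Real.pi), Complex.exp ((((m : ℂ) - n) * Complex.I) * (t : ℂ)) =
      if m = n then (2 * Real.pi : ℂ) else 0 := by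
  split_ifs with h
  · subst h; simp
  · have hne : ((m : ℂ) - n) * Complex.I ≠ 0 := by
      refine mul_ne_zero (sub_ne_zero.2 (by exact_mod_cast h)) Complex.I_ne_zero
    rw [integral_exp_mul_complex hne]
    have : Complex.exp (((m : ℂ) - n) * Complex.I * ((2 * Real.pi : ℝ) : ℂ)) = 1 := by
      rw [Complex.exp_eq_one_iff]
      refine ⟨(m : ℤ) - n, ?_⟩
      push_cast
      ring
    rw [this]; simp

lemma parseval (N L : ℕ) (c : ℕ → ℂ) :
    ∫ t in (0 : ℝ)..(2 * Real.pi), ‖trigP N L c t‖ ^ 2 =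
      2 * Real.pi * ∑ m ∈ Finset.range L, ‖c m‖ ^ 2 := by
  have key : ∀ t : ℝ, ((‖trigP N L c t‖ ^ 2 : ℝ) : ℂ) =
      ∑ m ∈ Finset.range L, ∑ n ∈ Finset.range L,
        (c m * (starRingEnd ℂ) (c n)) * Complex.exp ((((m : ℂ) - n) * Complex.I) * (t : ℂ)) := by
    intro t
    have h1 : ((‖trigP N L c t‖ ^ 2 : ℝ) : ℂ) =
        trigP N L c t * (starRingEnd ℂ) (trigP N L c t) := by
      rw [Complex.mul_conj, Complex.normSq_eq_norm_sq]
    rw [h1]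
    unfold trigP
    rw [map_sum, Finset.sum_mul_sum]
    refine Finset.sum_congr rfl fun m _ => Finset.sum_congr rfl fun n _ => ?_
    rw [map_mul, ← Complex.exp_conj, mul_mul_mul_comm, ← Complex.exp_add]
    congr 2
    simp
    ring
  have h2 : ((∫ t in (0 : ℝ)..(2 * Real.pi), ‖trigP N L c t‖ ^ 2 : ℝ) : ℂ) =
      ((2 * Real.pi * ∑ m ∈ Finset.range L, ‖c m‖ ^ 2 : ℝ) : ℂ) := by
    rw [← intervalIntegral.integral_ofReal]
    simp_rw [key]
    rw [intervalIntegral.integral_finsetSum]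
    · simp only [Complex.ofReal_mul, Complex.ofReal_sum, Finset.mul_sum]
      refine Finset.sum_congr rfl fun m hm => ?_
      rw [intervalIntegral.integral_finsetSum]
      · simp_rw [intervalIntegral.integral_const_mul, int_exp]
        simp only [mul_ite, mul_zero, Finset.sum_ite_eq, hm, if_true]
        rw [Complex.mul_conj, Complex.normSq_eq_norm_sq]
        push_cast
        ring
      · intro n _
        exact Continuous.intervalIntegrable (by fun_prop) _ _
    · intro m _
      exact Continuous.intervalIntegrable (by fun_prop) _ _
  exact_mod_cast h2

lemma shift_int (N L : ℕ) (c : ℕ → ℂ) (s : ℝ) :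
    ∫ t in (0 : ℝ)..(2 * Real.pi), (ρ (trigP N L c (t + s))) ^ 2 =
      ∫ t in (0 : ℝ)..(2 * Real.pi), (ρ (trigP N L c t)) ^ 2 := by
  have hp : Function.Periodic (fun t => (ρ (trigP N L c t)) ^ 2) (2 * Real.pi) := by
    intro t
    simp only [trigP_periodic N L c t]
  rw [intervalIntegral.integral_comp_add_right (fun t => (ρ (trigP N L c t)) ^ 2) s]
  have := hp.intervalIntegral_add_eq s 0
  rw [zero_add, add_comm (2 * Real.pi) s]
  simpa using this

lemma diff_eq (N L : ℕ) (c : ℕ → ℂ) (s t : ℝ) :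
    trigP N L c (t + s) - Complex.exp ((N : ℂ) * s * Complex.I) * trigP N L c t =
      trigP N L (fun m => c m * (Complex.exp ((N : ℂ) * s * Complex.I) *
        (Complex.exp (Complex.I * ((m * s : ℝ) : ℂ)) - 1))) t := by
  unfold trigP
  rw [Finset.mul_sum, ← Finset.sum_sub_distrib]
  refine Finset.sum_congr rfl fun m _ => ?_
  have : Complex.exp (((N + m : ℕ) : ℂ) * ((t + s : ℝ) : ℂ) * Complex.I) =
      Complex.exp ((N : ℂ) * s * Complex.I) * Complex.exp (Complex.I * ((m * s : ℝ) : ℂ)) *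
       Complex.exp (((N + m : ℕ) : ℂ) * (t : ℂ) * Complex.I) := by
    rw [← Complex.exp_add, ← Complex.exp_add]
    congr 1
    push_cast
    ring
  rw [this]
  ring

lemma diff_int (N L : ℕ) (c : ℕ → ℂ) (s : ℝ) :
    ∫ t in (0 : ℝ)..(2 * Real.pi),
      ‖trigP N L c (t + s) - Complex.exp ((N : ℂ) * s * Complex.I) * trigP N L c t‖ ^ 2 ≤
      (L * s) ^ 2 * ∫ t in (0 : ℝ)..(2 * Real.pi), ‖trigP N L c t‖ ^ 2 := by
  simp_rw [diff_eq]
  rw [parseval, parseval, mul_left_comm, Finset.mul_sum _ _ ((L * s) ^ 2)]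
  have hpi : (0 : ℝ) ≤ 2 * Real.pi := by positivity
  refine mul_le_mul_of_nonneg_left (Finset.sum_le_sum fun m hm => ?_) hpi
  have hm' : (m : ℝ) ≤ L := by exact_mod_cast (Finset.mem_range.1 hm).le
  have h1 : ‖Complex.exp ((N : ℂ) * s * Complex.I)‖ = 1 := by
    have := Complex.norm_exp_ofReal_mul_I (N * s)
    push_cast at this
    exact this
  have h2 : ‖Complex.exp (Complex.I * ((m * s : ℝ) : ℂ)) - 1‖ ≤ ‖(m * s : ℝ)‖ :=
    Real.norm_exp_I_mul_ofReal_sub_one_le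
  rw [norm_mul, norm_mul, h1, one_mul, mul_pow, mul_comm]
  refine mul_le_mul_of_nonneg_right ?_ (by positivity)
  calc _ ≤ ‖(m * s : ℝ)‖ ^ 2 := by gcongr
    _ = (m : ℝ) ^ 2 * s ^ 2 := by rw [Real.norm_eq_abs, sq_abs, mul_pow]
    _ ≤ (L : ℝ) ^ 2 * s ^ 2 := by gcongr
    _ = _ := by ring

lemma rho_lip (z w : ℂ) : ρ z ^ 2 ≤ 2 * ρ w ^ 2 + 2 * ‖w - z‖ ^ 2 := by
  unfold ρ
  rw [sq_abs, sq_abs]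
  have h : |‖1 + z‖ - ‖1 + w‖| ≤ ‖w - z‖ := by
    have := abs_norm_sub_norm_le (1 + z) (1 + w)
    rwa [add_sub_add_left_eq_sub, norm_sub_rev] at this
  have h' : (‖1 + z‖ - ‖1 + w‖) ^ 2 ≤ ‖w - z‖ ^ 2 := by
    rw [← sq_abs]; gcongr
  nlinarith [sq_nonneg ((‖1 + w‖ - 1) - (‖1 + z‖ - ‖1 + w‖))]

lemma rho_low (z : ℂ) : (‖z‖ ^ 2 + 2 * z.re) ^ 2 ≤ ρ z ^ 2 * (‖z‖ + 2) ^ 2 := by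
  unfold ρ
  rw [sq_abs]
  have h1 : ‖1 + z‖ ^ 2 = 1 + 2 * z.re + ‖z‖ ^ 2 := by
    rw [← Complex.normSq_eq_norm_sq, ← Complex.normSq_eq_norm_sq, Complex.normSq_apply,
      Complex.normSq_apply]
    simp
    ring
  have h2 : ‖1 + z‖ ≤ 1 + ‖z‖ := by
    simpa using norm_add_le (1 : ℂ) z
  have h3 : ‖z‖ ^ 2 + 2 * z.re = (‖1 + z‖ - 1) * (‖1 + z‖ + 1) := by
    linear_combination (-1 : ℝ) * h1
  rw [h3, mul_pow]
  have := norm_nonneg (1 + z)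
  gcongr ?_ * ?_ ^ 2
  linarith

lemma rho_four (z : ℂ) : 4 / 3 * ‖z‖ ^ 2 ≤
    ρ z ^ 2 + ρ (Complex.I * z) ^ 2 + ρ (-z) ^ 2 + ρ (-Complex.I * z) ^ 2 := by
  have h0 := rho_low z
  have h1 := rho_low (Complex.I * z)
  have h2 := rho_low (-z)
  have h3 := rho_low (-Complex.I * z)
  have hz : ‖z‖ ^ 2 = z.re ^ 2 + z.im ^ 2 := by
    rw [← Complex.normSq_eq_norm_sq, Complex.normSq_apply]; ring
  simp only [norm_mul, norm_neg, Complex.norm_I, one_mul, Complex.mul_re, Complex.I_re,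
    Complex.I_im, Complex.neg_re, Complex.neg_im, zero_mul, zero_sub, neg_zero] at h1 h2 h3
  have hr := norm_nonneg z
  set r := ‖z‖
  have hpos : 0 < (r + 2) ^ 2 := by positivity
  refine le_of_mul_le_mul_right ?_ hpos
  have e : (r ^ 2 + 2 * z.re) ^ 2 + (r ^ 2 + 2 * (-z.im)) ^ 2 + (r ^ 2 + 2 * (-z.re)) ^ 2
      + (r ^ 2 + 2 * z.im) ^ 2 = 4 * r ^ 4 + 8 * r ^ 2 := by
    linear_combination (-8 : ℝ) * hz
  have e2 : 4 / 3 * r ^ 2 * (r + 2) ^ 2 ≤ 4 * r ^ 4 + 8 * r ^ 2 := by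
    nlinarith [mul_nonneg (sq_nonneg r) (sq_nonneg (r - 1))]
  ring_nf at *
  linarith

lemma one_shift (N L : ℕ) (c : ℕ → ℂ) (s : ℝ) (u : ℂ)
    (hu : Complex.exp ((N : ℂ) * s * Complex.I) = u) :
    ∫ t in (0 : ℝ)..(2 * Real.pi), ρ (u * trigP N L c t) ^ 2 ≤
      2 * (∫ t in (0 : ℝ)..(2 * Real.pi), ρ (trigP N L c t) ^ 2) +
      2 * ((L * s) ^ 2 * ∫ t in (0 : ℝ)..(2 * Real.pi), ‖trigP N L c t‖ ^ 2) := by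
  subst hu
  have hc := trigP_cont N L c
  have hρ := rho_cont
  have hd := diff_int N L c s
  rw [← shift_int N L c s]
  calc _ ≤ ∫ t in (0 : ℝ)..(2 * Real.pi), (2 * ρ (trigP N L c (t + s)) ^ 2 +
        2 * ‖trigP N L c (t + s) - Complex.exp ((N : ℂ) * s * Complex.I) * trigP N L c t‖ ^ 2) := by
        refine intervalIntegral.integral_mono_on (by positivity)
          (Continuous.intervalIntegrable (by fun_prop) _ _)
          (Continuous.intervalIntegrable (by fun_prop) _ _) fun t _ => rho_lip _ _
    _ = 2 * (∫ t in (0 : ℝ)..(2 * Real.pi), ρ (trigP N L c (t + s)) ^ 2) +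
        2 * ∫ t in (0 : ℝ)..(2 * Real.pi),
        ‖trigP N L c (t + s) - Complex.exp ((N : ℂ) * s * Complex.I) * trigP N L c t‖ ^ 2 := by
        rw [intervalIntegral.integral_add (Continuous.intervalIntegrable (by fun_prop) _ _)
          (Continuous.intervalIntegrable (by fun_prop) _ _), intervalIntegral.integral_const_mul,
          intervalIntegral.integral_const_mul]
    _ ≤ _ := by linarith

lemma main_int (N L : ℕ) (hN : 1 ≤ N) (hNL : 1343 * L ^ 2 ≤ N ^ 2) (c : ℕ → ℂ) :
    ∫ t in (0 : ℝ)..(2 * Real.pi), ‖trigP N L c t‖ ^ 2 ≤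
      32 * ∫ t in (0 : ℝ)..(2 * Real.pi), ρ (trigP N L c t) ^ 2 := by
  have hc := trigP_cont N L c
  have hρ := rho_cont
  have hN0 : (N : ℝ) ≠ 0 := by positivity
  have hN0' : (N : ℂ) ≠ 0 := by exact_mod_cast hN0
  have hexp : ∀ k : ℕ, Complex.exp ((N : ℂ) * ((k * (Real.pi / 2) / N : ℝ) : ℂ) * Complex.I) =
      Complex.I ^ k := by
    intro k
    have : (N : ℂ) * ((k * (Real.pi / 2) / N : ℝ) : ℂ) * Complex.I =
        k * ((Real.pi / 2 : ℂ) * Complex.I) := by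
      push_cast
      field_simp
    rw [this, Complex.exp_nat_mul, Complex.exp_pi_div_two_mul_I]
  have hs : ∀ k : ℕ, ((L : ℝ) * (k * (Real.pi / 2) / N)) ^ 2 ≤ k ^ 2 * (4 / 1343) := by
    intro k
    have hq : 1343 * (L : ℝ) ^ 2 ≤ (N : ℝ) ^ 2 := by exact_mod_cast hNL
    have hp : (Real.pi / 2) ^ 2 ≤ 4 := by nlinarith [Real.pi_le_four, Real.pi_pos]
    have hl : (L : ℝ) ^ 2 / (N : ℝ) ^ 2 ≤ 1 / 1343 := by
      rw [div_le_div_iff₀ (by positivity) (by norm_num)]; linarith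
    calc _ = (k : ℝ) ^ 2 * ((Real.pi / 2) ^ 2 * ((L : ℝ) ^ 2 / (N : ℝ) ^ 2)) := by
          field_simp
      _ ≤ (k : ℝ) ^ 2 * (4 * (1 / 1343)) := by gcongr
      _ = _ := by ring
  set A := ∫ t in (0 : ℝ)..(2 * Real.pi), ‖trigP N L c t‖ ^ 2 with hA
  have hA0 : 0 ≤ A := intervalIntegral.integral_nonneg (by positivity) fun t _ => by positivity
  have hB0 : 0 ≤ ∫ t in (0 : ℝ)..(2 * Real.pi), ρ (trigP N L c t) ^ 2 :=
    intervalIntegral.integral_nonneg (by positivity) fun t _ => by positivity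
  have hk : ∀ k : ℕ, ∫ t in (0 : ℝ)..(2 * Real.pi), ρ (Complex.I ^ k * trigP N L c t) ^ 2 ≤
      2 * (∫ t in (0 : ℝ)..(2 * Real.pi), ρ (trigP N L c t) ^ 2) +
      2 * (k ^ 2 * (4 / 1343) * A) := by
    intro k
    refine (one_shift N L c _ _ (hexp k)).trans ?_
    have := mul_le_mul_of_nonneg_right (hs k) hA0
    linarith
  have hsum : 4 / 3 * A ≤ (∫ t in (0 : ℝ)..(2 * Real.pi), ρ (Complex.I ^ 0 * trigP N L c t) ^ 2) +
      (∫ t in (0 : ℝ)..(2 * Real.pi), ρ (Complex.I ^ 1 * trigP N L c t) ^ 2) +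
      (∫ t in (0 : ℝ)..(2 * Real.pi), ρ (Complex.I ^ 2 * trigP N L c t) ^ 2) +
      (∫ t in (0 : ℝ)..(2 * Real.pi), ρ (Complex.I ^ 3 * trigP N L c t) ^ 2) := by
    have hI : ∀ k : ℕ, IntervalIntegrable
        (fun t => ρ (Complex.I ^ k * trigP N L c t) ^ 2) volume 0 (2 * Real.pi) :=
      fun k => Continuous.intervalIntegrable (by fun_prop) _ _
    rw [← intervalIntegral.integral_add (hI 0) (hI 1),
      ← intervalIntegral.integral_add ((hI 0).add (hI 1)) (hI 2),
      ← intervalIntegral.integral_add (((hI 0).add (hI 1)).add (hI 2)) (hI 3), hA,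
      ← intervalIntegral.integral_const_mul]
    refine intervalIntegral.integral_mono_on (by positivity)
      (Continuous.intervalIntegrable (by fun_prop) _ _)
      (Continuous.intervalIntegrable (by fun_prop) _ _) fun t _ => ?_
    have := rho_four (trigP N L c t)
    simpa [Complex.I_sq, Complex.I_pow_three] using this
  have h0 := hk 0
  have h1 := hk 1
  have h2 := hk 2
  have h3 := hk 3
  push_cast at h0 h1 h2 h3
  linarith

/-- **High-frequency estimate.** If `N, L ≥ 1` satisfy `1343 L² ≤ N²` and
`P(t) = Σ_{m=0}^{L−1} b_m e^{i(N+m)t}`, then `‖P‖²_{L²(S¹)} ≤ 32 ‖ρ ∘ P‖²_{L²(S¹)}`. -/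
theorem stmt10 (N L : ℕ) (hN : 1 ≤ N) (hL : 1 ≤ L) (hNL : 1343 * L ^ 2 ≤ N ^ 2)
    (b : ℕ → ℂ) :
    circleAvg (fun t =>
        ‖∑ m ∈ Finset.range L, b m * Complex.exp (((N + m : ℕ) : ℂ) * (t : ℂ) * Complex.I)‖ ^ 2)
      ≤ 32 * circleAvg (fun t =>
          (ρ (∑ m ∈ Finset.range L,
            b m * Complex.exp (((N + m : ℕ) : ℂ) * (t : ℂ) * Complex.I))) ^ 2) := by
  have h := main_int N L hN hNL b
  unfold trigP at h
  unfold circleAvg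
  have := mul_le_mul_of_nonneg_left h (show 0 ≤ 1 / (2 * Real.pi) by positivity)
  linarith
end

section
/- Let D ≥ 1, let a₁, …, a_D ∈ ℂ, and for ℓ ≥ 1 set U_ℓ(z) = Σ_{n ∈ I_ℓ, n ≤ D} a_n z^n, where I_ℓ = {n ∈ ℕ : ℓ² ≤ n < (ℓ+1)²}. Then for every ℓ ≥ 1 and every integer j ≥ 0, (1/π) ∫_{{j ≤ |z| < j+1}} |U_ℓ(z)|² e^{−|z|²} dm(z) ≤ e^{1/4} e^{−((|j−ℓ|−1)₊)²} ‖U_ℓ‖_F², where x₊ = max(x, 0). -/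
open MeasureTheory

/-- The Fock norm of a function `F : ℂ → E`:
`‖F‖_F² = (1/π) ∫_ℂ ‖F(z)‖² e^{-|z|²} dm(z)`. -/
noncomputable def fockNorm {E : Type*} [NormedAddCommGroup E] (F : ℂ → E) : ℝ :=
  Real.sqrt ((1 / Real.pi) * ∫ z : ℂ, ‖F z‖ ^ 2 * Real.exp (-‖z‖ ^ 2))

/-- The block polynomial `U_ℓ(z) = Σ_{n ∈ I_ℓ, n ≤ D} a_n zⁿ`, where
`I_ℓ = {n : ℓ² ≤ n < (ℓ+1)²}`. -/
noncomputable def Ublock (D ℓ : ℕ) (a : ℕ → ℂ) (z : ℂ) : ℂ :=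
  ∑ n ∈ (Finset.Icc 1 D).filter (fun n => ℓ ^ 2 ≤ n ∧ n < (ℓ + 1) ^ 2), a n * z ^ n

lemma fk_diag (c : ℝ) (hc : 0 < c) (k : ℕ) :
    ∫ z : ℂ, ‖z‖ ^ k * Real.exp (-c * ‖z‖ ^ 2) =
      Real.pi * c ^ (-((k : ℝ) + 2) / 2) * Real.Gamma (((k : ℝ) + 2) / 2) := by
  have h := Complex.integral_rpow_mul_exp_neg_mul_rpow (p := 2) (q := k) (b := c) (by norm_num)
    (by have : (0 : ℝ) ≤ k := Nat.cast_nonneg k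
        linarith) hc
  have e : ∀ z : ℂ, ‖z‖ ^ k * Real.exp (-c * ‖z‖ ^ 2) =
      ‖z‖ ^ (k : ℝ) * Real.exp (-c * ‖z‖ ^ (2 : ℝ)) := by
    intro z
    rw [Real.rpow_natCast, Real.rpow_two]
  simp_rw [e]
  rw [h]
  ring_nf

lemma fk_int (c : ℝ) (hc : 0 < c) (k : ℕ) :
    Integrable (fun z : ℂ => ‖z‖ ^ k * Real.exp (-c * ‖z‖ ^ 2)) := by
  apply Integrable.of_integral_ne_zero
  rw [fk_diag c hc k]
  have : 0 < Real.Gamma (((k : ℝ) + 2) / 2) := Real.Gamma_pos_of_pos (by positivity)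
  positivity

lemma fk_int2 (c : ℝ) (hc : 0 < c) (n m : ℕ) :
    Integrable (fun z : ℂ => z ^ n * (starRingEnd ℂ z) ^ m * (Real.exp (-c * ‖z‖ ^ 2) : ℂ)) := by
  refine (fk_int c hc (n + m)).mono' ?_ ?_
  · apply Continuous.aestronglyMeasurable
    have := Complex.continuous_conj
    fun_prop
  · refine Filter.Eventually.of_forall fun z => le_of_eq ?_
    rw [norm_mul, norm_mul, norm_pow, norm_pow, RCLike.norm_conj, Complex.norm_real,
      Real.norm_of_nonneg (Real.exp_pos _).le, pow_add]

lemma fk_off (c : ℝ) (n m : ℕ) (hnm : n ≠ m) :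
    ∫ z : ℂ, z ^ n * (starRingEnd ℂ z) ^ m * (Real.exp (-c * ‖z‖ ^ 2) : ℂ) = 0 := by
  set θ : ℝ := Real.pi / ((n : ℝ) - m) with hθ
  set ζ : Circle := Circle.exp θ with hζ
  have key : (ζ : ℂ) ^ n * (starRingEnd ℂ (ζ : ℂ)) ^ m = -1 := by
    have hne : (n : ℂ) - m ≠ 0 := by
      rw [sub_ne_zero]; exact_mod_cast hnm
    rw [hζ, Circle.coe_exp, ← Complex.exp_conj, ← Complex.exp_nat_mul, ← Complex.exp_nat_mul,
      ← Complex.exp_add, ← Complex.exp_pi_mul_I]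
    congr 1
    simp only [map_mul, Complex.conj_ofReal, Complex.conj_I, hθ]
    push_cast
    field_simp
    ring
  have hmp := (rotation ζ).measurePreserving
  have h := hmp.integral_comp (rotation ζ).toHomeomorph.measurableEmbedding
    (fun z : ℂ => z ^ n * (starRingEnd ℂ z) ^ m * (Real.exp (-c * ‖z‖ ^ 2) : ℂ))
  have e : ∀ z : ℂ, (rotation ζ z) ^ n * (starRingEnd ℂ (rotation ζ z)) ^ m *
      (Real.exp (-c * ‖rotation ζ z‖ ^ 2) : ℂ) =
      - (z ^ n * (starRingEnd ℂ z) ^ m * (Real.exp (-c * ‖z‖ ^ 2) : ℂ)) := by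
    intro z
    rw [LinearIsometryEquiv.norm_map, rotation_apply, map_mul, mul_pow, mul_pow]
    linear_combination (z ^ n * (starRingEnd ℂ z) ^ m * (Real.exp (-c * ‖z‖ ^ 2) : ℂ)) * key
  simp_rw [e] at h
  rw [integral_neg] at h
  exact self_eq_neg.mp h.symm

lemma fk_norm_sq (s : Finset ℕ) (a : ℕ → ℂ) (c : ℝ) (z : ℂ) :
    ((‖∑ n ∈ s, a n * z ^ n‖ ^ 2 * Real.exp (-c * ‖z‖ ^ 2) : ℝ) : ℂ) =
      ∑ n ∈ s, ∑ m ∈ s, (a n * starRingEnd ℂ (a m)) *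
        (z ^ n * (starRingEnd ℂ z) ^ m * (Real.exp (-c * ‖z‖ ^ 2) : ℂ)) := by
  push_cast
  rw [← Complex.mul_conj', map_sum, Finset.sum_mul_sum, Finset.sum_mul]
  refine Finset.sum_congr rfl fun n _ => ?_
  rw [Finset.sum_mul]
  refine Finset.sum_congr rfl fun m _ => ?_
  rw [map_mul, map_pow]
  ring

lemma fk_integrable (s : Finset ℕ) (a : ℕ → ℂ) (c : ℝ) (hc : 0 < c) :
    Integrable (fun z : ℂ => ‖∑ n ∈ s, a n * z ^ n‖ ^ 2 * Real.exp (-c * ‖z‖ ^ 2)) := by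
  have h : Integrable (fun z : ℂ =>
      ((‖∑ n ∈ s, a n * z ^ n‖ ^ 2 * Real.exp (-c * ‖z‖ ^ 2) : ℝ) : ℂ)) := by
    simp_rw [fk_norm_sq]
    exact integrable_finsetSum _ fun n _ => integrable_finsetSum _ fun m _ =>
      (fk_int2 c hc n m).const_mul _
  exact h.re

lemma fk_integral (s : Finset ℕ) (a : ℕ → ℂ) (c : ℝ) (hc : 0 < c) :
    ∫ z : ℂ, ‖∑ n ∈ s, a n * z ^ n‖ ^ 2 * Real.exp (-c * ‖z‖ ^ 2) =
      ∑ n ∈ s, ‖a n‖ ^ 2 * (Real.pi * (c⁻¹) ^ (n + 1) * Real.Gamma (n + 1)) := by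
  apply Complex.ofReal_injective
  rw [← integral_complex_ofReal]
  simp_rw [fk_norm_sq]
  rw [integral_finsetSum _ fun n _ => integrable_finsetSum _ fun m _ =>
      (fk_int2 c hc n m).const_mul _]
  rw [Complex.ofReal_sum]
  refine Finset.sum_congr rfl fun n hn => ?_
  rw [integral_finsetSum _ fun m _ => (fk_int2 c hc n m).const_mul _]
  rw [Finset.sum_eq_single_of_mem n hn]
  · rw [integral_const_mul, Complex.mul_conj']
    have e : ∀ z : ℂ, z ^ n * (starRingEnd ℂ z) ^ n * (Real.exp (-c * ‖z‖ ^ 2) : ℂ) =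
        ((‖z‖ ^ (2 * n) * Real.exp (-c * ‖z‖ ^ 2) : ℝ) : ℂ) := by
      intro z
      rw [← mul_pow, Complex.mul_conj', pow_mul]
      push_cast
      rfl
    simp_rw [e]
    rw [integral_complex_ofReal, fk_diag c hc]
    have e1 : (((2 * n : ℕ) : ℝ) + 2) / 2 = (n : ℝ) + 1 := by push_cast; ring
    have e2 : -(((2 * n : ℕ) : ℝ) + 2) / 2 = -((n + 1 : ℕ) : ℝ) := by push_cast; ring
    rw [e1, e2, Real.rpow_neg hc.le, Real.rpow_natCast, ← inv_pow]
    push_cast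
    ring
  · intro m _ hm
    rw [integral_const_mul, fk_off c n m (Ne.symm hm), mul_zero]

lemma fk_main (s : Finset ℕ) (a : ℕ → ℂ) (c B M : ℝ) (hc : 0 < c) (hB : 0 ≤ B) (S : Set ℂ)
    (hS : MeasurableSet S)
    (h1 : ∀ z ∈ S, Real.exp (-‖z‖ ^ 2) ≤ B * Real.exp (-c * ‖z‖ ^ 2))
    (h2 : ∀ n ∈ s, (c⁻¹) ^ (n + 1) ≤ M) :
    ∫ z in S, ‖∑ n ∈ s, a n * z ^ n‖ ^ 2 * Real.exp (-‖z‖ ^ 2) ≤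
      (B * M) * ∫ z : ℂ, ‖∑ n ∈ s, a n * z ^ n‖ ^ 2 * Real.exp (-‖z‖ ^ 2) := by
  have i1 := fk_integrable s a 1 one_pos
  have v1 := fk_integral s a 1 one_pos
  have ic := fk_integrable s a c hc
  have vc := fk_integral s a c hc
  simp only [neg_mul, one_mul, inv_one, one_pow, mul_one] at i1 v1
  calc ∫ z in S, ‖∑ n ∈ s, a n * z ^ n‖ ^ 2 * Real.exp (-‖z‖ ^ 2)
      ≤ ∫ z in S, B * (‖∑ n ∈ s, a n * z ^ n‖ ^ 2 * Real.exp (-c * ‖z‖ ^ 2)) := by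
        refine setIntegral_mono_on i1.integrableOn (ic.const_mul B).integrableOn hS fun z hz => ?_
        rw [mul_left_comm]
        exact mul_le_mul_of_nonneg_left (h1 z hz) (by positivity)
    _ ≤ ∫ z : ℂ, B * (‖∑ n ∈ s, a n * z ^ n‖ ^ 2 * Real.exp (-c * ‖z‖ ^ 2)) :=
        setIntegral_le_integral (ic.const_mul B)
          (Filter.Eventually.of_forall fun z => by
            simp only [Pi.zero_apply]
            positivity)
    _ ≤ _ := by
        rw [integral_const_mul, vc, v1, mul_assoc]
        refine mul_le_mul_of_nonneg_left ?_ hB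
        rw [Finset.mul_sum]
        refine Finset.sum_le_sum fun n hn => ?_
        have hG : 0 < Real.Gamma ((n : ℝ) + 1) := Real.Gamma_pos_of_pos (by positivity)
        have := mul_le_mul_of_nonneg_right (h2 n hn)
          (show 0 ≤ ‖a n‖ ^ 2 * (Real.pi * Real.Gamma ((n : ℝ) + 1)) by positivity)
        linarith

/-- Numerical bound: `(y/x)^{2x²} ≤ e^{2x(y-x)}`. -/
lemma fk_num (x : ℕ) (y : ℝ) (hx : 0 < x) (hy : 0 < y) :
    ((y ^ 2) / (x : ℝ) ^ 2) ^ (x ^ 2) ≤ Real.exp (2 * x * (y - x)) := by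
  have hx' : (0 : ℝ) < x := by exact_mod_cast hx
  have h : y / x ≤ Real.exp (y / x - 1) := by
    have := Real.add_one_le_exp (y / x - 1)
    linarith
  rw [← div_pow, ← pow_mul]
  refine (pow_le_pow_left₀ (by positivity) h _).trans (le_of_eq ?_)
  rw [← Real.exp_nat_mul]
  congr 1
  push_cast
  field_simp

lemma fk_block (s : Finset ℕ) (a : ℕ → ℂ) (ℓ : ℕ) (hℓ : 1 ≤ ℓ) (j : ℕ)
    (hs : ∀ n ∈ s, ℓ ^ 2 ≤ n ∧ n < (ℓ + 1) ^ 2) :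
    ∫ z in {z : ℂ | (j : ℝ) ≤ ‖z‖ ∧ ‖z‖ < (j : ℝ) + 1},
        ‖∑ n ∈ s, a n * z ^ n‖ ^ 2 * Real.exp (-‖z‖ ^ 2) ≤
      Real.exp (-(max (|(j : ℝ) - (ℓ : ℝ)| - 1) 0) ^ 2) *
        ∫ z : ℂ, ‖∑ n ∈ s, a n * z ^ n‖ ^ 2 * Real.exp (-‖z‖ ^ 2) := by
  have hS : MeasurableSet {z : ℂ | (j : ℝ) ≤ ‖z‖ ∧ ‖z‖ < (j : ℝ) + 1} :=
    (measurableSet_le measurable_const measurable_norm).inter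
      (measurableSet_lt measurable_norm measurable_const)
  have hnn : 0 ≤ ∫ z : ℂ, ‖∑ n ∈ s, a n * z ^ n‖ ^ 2 * Real.exp (-‖z‖ ^ 2) :=
    integral_nonneg fun z => by positivity
  have hl : (1 : ℝ) ≤ ℓ := by exact_mod_cast hℓ
  have hj0 : (0 : ℝ) ≤ j := Nat.cast_nonneg j
  rcases le_or_gt (|(j : ℝ) - ℓ|) 1 with h | h
  · rw [max_eq_right (by linarith)]
    have := fk_main s a 1 1 1 one_pos zero_le_one _ hS (fun z _ => by simp) (fun n _ => by simp)
    simpa using this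
  rw [max_eq_left (by linarith)]
  rcases lt_abs.mp h with h | h
  · rw [abs_of_pos (by linarith)]
    have hjp : (0 : ℝ) < j := by linarith
    have hle : ((ℓ : ℝ) + 1) ^ 2 ≤ (j : ℝ) ^ 2 := by
      apply pow_le_pow_left₀ <;> linarith
    set c : ℝ := ((ℓ : ℝ) + 1) ^ 2 / (j : ℝ) ^ 2 with hcdef
    have hc : 0 < c := by positivity
    have hc1 : c ≤ 1 := by rw [hcdef, div_le_one (by positivity)]; exact hle
    have hcj : c * (j : ℝ) ^ 2 = ((ℓ : ℝ) + 1) ^ 2 := by rw [hcdef]; field_simp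
    have num := fk_num (ℓ + 1) j (by omega) hjp
    refine (fk_main s a c (Real.exp (-(1 - c) * (j : ℝ) ^ 2)) (c⁻¹ ^ ((ℓ + 1) ^ 2)) hc
      (Real.exp_pos _).le _ hS ?_ ?_).trans (mul_le_mul_of_nonneg_right ?_ hnn)
    · rintro z ⟨hz, -⟩
      rw [← Real.exp_add]
      apply Real.exp_le_exp.mpr
      have : (j : ℝ) ^ 2 ≤ ‖z‖ ^ 2 := pow_le_pow_left₀ hj0 hz 2
      nlinarith
    · intro n hn
      exact pow_le_pow_right₀ ((one_le_inv₀ hc).mpr hc1) (hs n hn).2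
    · have e : c⁻¹ = (j : ℝ) ^ 2 / ((ℓ + 1 : ℕ) : ℝ) ^ 2 := by
        rw [hcdef, inv_div]; push_cast; rfl
      rw [e]
      refine (mul_le_mul_of_nonneg_left num (Real.exp_pos _).le).trans ?_
      rw [← Real.exp_add]
      apply Real.exp_le_exp.mpr
      push_cast
      nlinarith
  · rw [abs_of_neg (by linarith)]
    have hle : ((j : ℝ) + 1) ^ 2 ≤ (ℓ : ℝ) ^ 2 := by
      apply pow_le_pow_left₀ <;> linarith
    set c : ℝ := (ℓ : ℝ) ^ 2 / ((j : ℝ) + 1) ^ 2 with hcdef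
    have hc : 0 < c := by positivity
    have hc1 : 1 ≤ c := by rw [hcdef, one_le_div (by positivity)]; exact hle
    have hcj : c * ((j : ℝ) + 1) ^ 2 = (ℓ : ℝ) ^ 2 := by rw [hcdef]; field_simp
    have num := fk_num ℓ ((j : ℝ) + 1) (by omega) (by linarith)
    refine (fk_main s a c (Real.exp ((c - 1) * ((j : ℝ) + 1) ^ 2)) (c⁻¹ ^ (ℓ ^ 2)) hc
      (Real.exp_pos _).le _ hS ?_ ?_).trans (mul_le_mul_of_nonneg_right ?_ hnn)
    · rintro z ⟨-, hz⟩
      rw [← Real.exp_add]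
      apply Real.exp_le_exp.mpr
      have : ‖z‖ ^ 2 ≤ ((j : ℝ) + 1) ^ 2 := pow_le_pow_left₀ (norm_nonneg _) hz.le 2
      nlinarith
    · intro n hn
      exact pow_le_pow_of_le_one (by positivity) (inv_le_one_of_one_le₀ hc1)
        ((hs n hn).1.trans n.le_succ)
    · have e : c⁻¹ = ((j : ℝ) + 1) ^ 2 / (ℓ : ℝ) ^ 2 := by
        rw [hcdef, inv_div]
      rw [e]
      refine (mul_le_mul_of_nonneg_left num (Real.exp_pos _).le).trans ?_
      rw [← Real.exp_add]
      apply Real.exp_le_exp.mpr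
      nlinarith

/-- **Single-block leakage estimate.** For `ℓ ≥ 1` and `j ≥ 0`,
`(1/π) ∫_{j ≤ |z| < j+1} |U_ℓ|² e^{−|z|²} dm ≤ e^{1/4} e^{−((|j−ℓ|−1)₊)²} ‖U_ℓ‖_F²`. -/
theorem stmt11 (D : ℕ) (hD : 1 ≤ D) (a : ℕ → ℂ) (ℓ : ℕ) (hℓ : 1 ≤ ℓ) (j : ℕ) :
    (1 / Real.pi) *
        ∫ z in {z : ℂ | (j : ℝ) ≤ ‖z‖ ∧ ‖z‖ < (j : ℝ) + 1},
          ‖Ublock D ℓ a z‖ ^ 2 * Real.exp (-‖z‖ ^ 2)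
      ≤ Real.exp (1 / 4) * Real.exp (-(max (|(j : ℝ) - (ℓ : ℝ)| - 1) 0) ^ 2) *
          (fockNorm (Ublock D ℓ a)) ^ 2 := by
  have hblock := fk_block
    ((Finset.Icc 1 D).filter (fun n => ℓ ^ 2 ≤ n ∧ n < (ℓ + 1) ^ 2)) a ℓ hℓ j
    (fun n hn => (Finset.mem_filter.mp hn).2)
  have hnn : 0 ≤ ∫ z : ℂ, ‖Ublock D ℓ a z‖ ^ 2 * Real.exp (-‖z‖ ^ 2) :=
    integral_nonneg fun z => by positivity
  have hpi : 0 ≤ 1 / Real.pi := by positivity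
  have h4 : (1 : ℝ) ≤ Real.exp (1 / 4) := Real.one_le_exp (by norm_num)
  rw [fockNorm, Real.sq_sqrt (mul_nonneg hpi hnn)]
  set E := Real.exp (-(max (|(j : ℝ) - (ℓ : ℝ)| - 1) 0) ^ 2)
  have hE : 0 ≤ E := (Real.exp_pos _).le
  refine (mul_le_mul_of_nonneg_left hblock hpi).trans ?_
  change (1 / Real.pi) * (E * ∫ z : ℂ, ‖Ublock D ℓ a z‖ ^ 2 * Real.exp (-‖z‖ ^ 2)) ≤ _
  rw [mul_left_comm, mul_assoc]
  exact le_mul_of_one_le_left (mul_nonneg hE (mul_nonneg hpi hnn)) h4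
end

section
/- Let M ≥ 2 be an integer and set η_M = 2 e^{1/4} Σ_{m ≥ M} e^{−m²}. Let D ≥ 1, let a₁, …, a_D ∈ ℂ, set U(z) = Σ_{n=1}^{D} a_n z^n, for ℓ ≥ 1 set U_ℓ(z) = Σ_{n ∈ I_ℓ, n ≤ D} a_n z^n where I_ℓ = {n ∈ ℕ : ℓ² ≤ n < (ℓ+1)²}, and for j ≥ 0 set V_j = Σ_{1 ≤ ℓ, |ℓ−j| ≤ M} U_ℓ and R_j = U − V_j. Then Σ_{j ≥ 0} (1/π) ∫_{{j ≤ |z| < j+1}} |R_j(z)|² e^{−|z|²} dm(z) ≤ η_M ‖U‖_F². -/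
open MeasureTheory

/-- The local part `V_j = Σ_{ℓ ≥ 1, |ℓ−j| ≤ M} U_ℓ`. -/
noncomputable def Vpart (M D j : ℕ) (a : ℕ → ℂ) (z : ℂ) : ℂ :=
  ∑ ℓ ∈ (Finset.range (j + M + 1)).filter
      (fun ℓ : ℕ => 1 ≤ ℓ ∧ ((ℓ : ℤ) - (j : ℤ)).natAbs ≤ M), Ublock D ℓ a z

/-- The tail `η_M = 2 e^{1/4} Σ_{m ≥ M} e^{−m²}`. -/
noncomputable def ηtail (M : ℕ) : ℝ :=
  2 * Real.exp (1 / 4) * ∑' m : ℕ, if M ≤ m then Real.exp (-(m : ℝ) ^ 2) else 0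


lemma aux_cross (φ : ℝ → ℝ) (n m : ℕ) (h : n ≠ m) :
    ∫ z : ℂ, (z ^ n * (starRingEnd ℂ z) ^ m) * (φ ‖z‖ : ℂ) = 0 := by
  have hne : ((n : ℝ) - (m : ℝ)) ≠ 0 := sub_ne_zero.mpr (by exact_mod_cast h)
  set t : ℝ := Real.pi / ((n : ℝ) - m) with ht
  have h1 := (LinearIsometryEquiv.measurePreserving (rotation (Circle.exp t))).integral_comp
    (rotation (Circle.exp t)).toHomeomorph.measurableEmbedding
    (fun z : ℂ => (z ^ n * (starRingEnd ℂ z) ^ m) * (φ ‖z‖ : ℂ))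
  have hc : (Circle.exp t : ℂ) ^ n * (starRingEnd ℂ (Circle.exp t : ℂ)) ^ m = -1 := by
    rw [Circle.coe_exp, ← Complex.exp_conj, ← Complex.exp_nat_mul, ← Complex.exp_nat_mul,
      ← Complex.exp_add, ← Complex.exp_pi_mul_I]
    congr 1
    have hne' : ((n : ℂ) - (m : ℂ)) ≠ 0 := by exact_mod_cast hne
    rw [ht]
    simp only [map_mul, Complex.conj_ofReal, Complex.conj_I]
    push_cast
    field_simp
    ring
  have h2 : ∀ z : ℂ, (fun z : ℂ => (z ^ n * (starRingEnd ℂ z) ^ m) * (φ ‖z‖ : ℂ))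
      (rotation (Circle.exp t) z) = -((z ^ n * (starRingEnd ℂ z) ^ m) * (φ ‖z‖ : ℂ)) := by
    intro z
    simp only [LinearIsometryEquiv.norm_map]
    rw [rotation_apply, map_mul, mul_pow, mul_pow]
    linear_combination (z ^ n * (starRingEnd ℂ z) ^ m) * (φ ‖z‖ : ℂ) * hc
  simp only [h2] at h1
  rw [integral_neg] at h1
  exact self_eq_neg.mp h1.symm

lemma aux_ortho (φ : ℝ → ℝ) (hφ : ∀ k : ℕ, Integrable (fun z : ℂ => ‖z‖ ^ k * φ ‖z‖))
    (S : Finset ℕ) (a : ℕ → ℂ) :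
    ∫ z : ℂ, ‖∑ n ∈ S, a n * z ^ n‖ ^ 2 * φ ‖z‖ =
      ∑ n ∈ S, ‖a n‖ ^ 2 * ∫ z : ℂ, ‖z‖ ^ (2 * n) * φ ‖z‖ := by
  have hint : ∀ n m : ℕ, Integrable
      (fun z : ℂ => (z ^ n * (starRingEnd ℂ z) ^ m) * (φ ‖z‖ : ℂ)) := by
    intro n m
    have h0 : AEStronglyMeasurable (fun z : ℂ => (φ ‖z‖ : ℂ)) := by
      have := (hφ 0).aestronglyMeasurable
      simp only [pow_zero, one_mul] at this
      exact Complex.continuous_ofReal.comp_aestronglyMeasurable this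
    refine (hφ (n + m)).norm.mono' ?_ ?_
    · refine AEStronglyMeasurable.mul ?_ h0
      exact (by fun_prop : Continuous fun z : ℂ =>
        (z ^ n * (starRingEnd ℂ z) ^ m)).aestronglyMeasurable
    · filter_upwards with z
      simp [pow_add]
  apply Complex.ofReal_injective
  rw [← integral_complex_ofReal]
  have e : ∀ z : ℂ, ((‖∑ n ∈ S, a n * z ^ n‖ ^ 2 * φ ‖z‖ : ℝ) : ℂ) =
      ∑ n ∈ S, ∑ m ∈ S, (a n * starRingEnd ℂ (a m)) *
        ((z ^ n * (starRingEnd ℂ z) ^ m) * (φ ‖z‖ : ℂ)) := by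
    intro z
    push_cast
    rw [← Complex.mul_conj', map_sum, Finset.sum_mul_sum, Finset.sum_mul]
    refine Finset.sum_congr rfl fun n _ => ?_
    rw [Finset.sum_mul]
    refine Finset.sum_congr rfl fun m _ => ?_
    simp only [map_mul, map_pow]
    ring
  simp only [e]
  rw [integral_finsetSum _ (fun n _ => integrable_finsetSum _ fun m _ => (hint n m).const_mul _)]
  rw [Complex.ofReal_sum]
  refine Finset.sum_congr rfl fun n hn => ?_
  rw [integral_finsetSum _ (fun m _ => (hint n m).const_mul _), Finset.sum_eq_single n]
  · rw [integral_const_mul, Complex.mul_conj', Complex.ofReal_mul, ← integral_complex_ofReal]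
    push_cast
    congr 2
    ext z
    rw [← mul_pow, Complex.mul_conj', ← pow_mul]
  · intro m _ hm
    rw [integral_const_mul, aux_cross φ n m hm.symm, mul_zero]
  · exact fun h => absurd hn h

lemma aux_int (k : ℕ) : Integrable (fun z : ℂ => ‖z‖ ^ k * Real.exp (-‖z‖ ^ 2)) := by
  rw [integrable_fun_norm_addHaar volume (f := fun r : ℝ => r ^ k * Real.exp (-r ^ 2))]
  have := (integrable_rpow_mul_exp_neg_mul_sq (b := 1) one_pos (s := (k + 1 : ℕ))
    (by have : (0 : ℝ) ≤ ((k + 1 : ℕ) : ℝ) := by positivity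
        linarith)).integrableOn (s := Set.Ioi 0)
  refine this.congr_fun (fun x _ => ?_) measurableSet_Ioi
  simp only [Complex.finrank_real_complex, Real.rpow_natCast, smul_eq_mul]
  ring_nf

lemma aux_full (n : ℕ) : ∫ z : ℂ, ‖z‖ ^ (2 * n) * Real.exp (-‖z‖ ^ 2)
    = Real.pi * n.factorial := by
  have h := Complex.integral_rpow_mul_exp_neg_rpow (p := 2) (q := (2 * n : ℕ)) (by norm_num)
    (by have : (0 : ℝ) ≤ ((2 * n : ℕ) : ℝ) := by positivity
        linarith)
  have e : ((((2 * n : ℕ) : ℝ) + 2) / 2) = (n : ℝ) + 1 := by push_cast; ring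
  rw [e, Real.Gamma_nat_eq_factorial] at h
  simp only [Real.rpow_natCast, Real.rpow_two] at h
  rw [h]; ring

/-- the annulus weight -/
noncomputable def annW (j : ℕ) : ℝ → ℝ :=
  (Set.Ico (j : ℝ) (j + 1)).indicator (fun r => Real.exp (-r ^ 2))

lemma annW_eq (j : ℕ) (g : ℂ → ℝ) :
    ∫ z in {z : ℂ | (j : ℝ) ≤ ‖z‖ ∧ ‖z‖ < (j : ℝ) + 1}, g z * Real.exp (-‖z‖ ^ 2)
      = ∫ z : ℂ, g z * annW j ‖z‖ := by
  have hm : MeasurableSet {z : ℂ | (j : ℝ) ≤ ‖z‖ ∧ ‖z‖ < (j : ℝ) + 1} :=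
    (measurableSet_Ico (a := (j : ℝ)) (b := (j : ℝ) + 1)).preimage measurable_norm
  rw [← integral_indicator hm]
  congr 1
  ext z
  by_cases h : (j : ℝ) ≤ ‖z‖ ∧ ‖z‖ < (j : ℝ) + 1
  · rw [Set.indicator_of_mem (by exact h), annW, Set.indicator_of_mem (by exact h)]
  · rw [Set.indicator_of_notMem (by exact h), annW, Set.indicator_of_notMem (by exact h), mul_zero]

lemma annW_int (j k : ℕ) : Integrable (fun z : ℂ => ‖z‖ ^ k * annW j ‖z‖) := by
  have hm : MeasurableSet {z : ℂ | (j : ℝ) ≤ ‖z‖ ∧ ‖z‖ < (j : ℝ) + 1} :=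
    (measurableSet_Ico (a := (j : ℝ)) (b := (j : ℝ) + 1)).preimage measurable_norm
  refine ((aux_int k).indicator hm).congr (Filter.Eventually.of_forall fun z => ?_)
  by_cases h : (j : ℝ) ≤ ‖z‖ ∧ ‖z‖ < (j : ℝ) + 1
  · simp only []
    rw [Set.indicator_of_mem (by exact h), annW, Set.indicator_of_mem (by exact h)]
  · simp only []
    rw [Set.indicator_of_notMem (by exact h), annW, Set.indicator_of_notMem (by exact h), mul_zero]

lemma annW_nonneg (j : ℕ) (r : ℝ) : 0 ≤ annW j r :=
  Set.indicator_nonneg (fun _ _ => (Real.exp_pos _).le) _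

lemma aux_point (n : ℕ) (r : ℝ) (hr : 0 ≤ r) :
    r ^ (2 * n + 1) * Real.exp (-r ^ 2) ≤
      √(n + 1 / 2) ^ (2 * n + 1) * Real.exp (-(n + 1 / 2 : ℝ)) *
        Real.exp (-(r - √(n + 1 / 2)) ^ 2) := by
  have hp : (0 : ℝ) < n + 1 / 2 := by positivity
  set s := √((n : ℝ) + 1 / 2) with hs
  have hs0 : 0 < s := Real.sqrt_pos.mpr hp
  have hs2 : s ^ 2 = n + 1 / 2 := Real.sq_sqrt hp.le
  have h1 : r / s ≤ Real.exp (r / s - 1) := by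
    have := Real.add_one_le_exp (r / s - 1); linarith
  have h2 : (r / s) ^ (2 * n + 1) ≤ Real.exp (2 * s * r - 2 * s ^ 2) := by
    refine (pow_le_pow_left₀ (by positivity) h1 _).trans_eq ?_
    rw [← Real.exp_nat_mul]
    congr 1
    have : ((2 * n + 1 : ℕ) : ℝ) = 2 * s ^ 2 := by rw [hs2]; push_cast; ring
    rw [this]; field_simp
  have h3 : r ^ (2 * n + 1) ≤ s ^ (2 * n + 1) * Real.exp (2 * s * r - 2 * s ^ 2) := by
    rw [div_pow, div_le_iff₀ (by positivity)] at h2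
    linarith
  calc r ^ (2 * n + 1) * Real.exp (-r ^ 2)
      ≤ s ^ (2 * n + 1) * Real.exp (2 * s * r - 2 * s ^ 2) * Real.exp (-r ^ 2) := by gcongr
    _ = _ := by
      have : Real.exp (2 * s * r - 2 * s ^ 2) * Real.exp (-r ^ 2) =
          Real.exp (-s ^ 2) * Real.exp (-(r - s) ^ 2) := by
        rw [← Real.exp_add, ← Real.exp_add]; congr 1; ring
      rw [← hs2]
      linear_combination s ^ (2 * n + 1) * this

lemma aux_C (n : ℕ) (hn : 1 ≤ n) :
    2 * (√(n + 1 / 2) ^ (2 * n + 1) * Real.exp (-(n + 1 / 2 : ℝ))) ≤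
      Real.exp (1 / 4) * n.factorial := by
  have hn0 : (0 : ℝ) < n := by exact_mod_cast hn
  have hn1 : (1 : ℝ) ≤ n := by exact_mod_cast hn
  have hp : (0 : ℝ) < n + 1 / 2 := by positivity
  have h1 : √((n : ℝ) + 1 / 2) ≤ √n * Real.exp (1 / (4 * n)) := by
    apply Real.sqrt_le_iff.mpr
    refine ⟨by positivity, ?_⟩
    rw [mul_pow, Real.sq_sqrt hn0.le, ← Real.exp_nat_mul]
    have := Real.add_one_le_exp (((2 : ℕ) : ℝ) * (1 / (4 * n)))
    calc (n : ℝ) + 1 / 2 = n * (((2 : ℕ) : ℝ) * (1 / (4 * n)) + 1) := by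
          push_cast; field_simp; ring
      _ ≤ _ := by gcongr
  have h2 : √((n : ℝ) + 1 / 2) ^ (2 * n + 1) ≤
      √n * n ^ n * Real.exp (1 / 2 + 1 / 4) := by
    calc √((n : ℝ) + 1 / 2) ^ (2 * n + 1) ≤ (√n * Real.exp (1 / (4 * n))) ^ (2 * n + 1) := by
          gcongr
      _ = √n * n ^ n * Real.exp (1 / 2 + 1 / (4 * n)) := by
          rw [mul_pow, pow_succ, pow_mul, Real.sq_sqrt hn0.le, ← Real.exp_nat_mul]
          have : ((2 * n + 1 : ℕ) : ℝ) * (1 / (4 * n)) = 1 / 2 + 1 / (4 * n) := by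
            push_cast; field_simp; ring
          rw [this]; ring
      _ ≤ _ := by
          gcongr
          linarith
  have h3 := Stirling.le_factorial_stirling n
  have h4 : 2 * √(n : ℝ) ≤ √(2 * Real.pi * n) := by
    apply Real.le_sqrt_of_sq_le
    rw [mul_pow, Real.sq_sqrt hn0.le]
    have := Real.pi_gt_three
    nlinarith
  have h5 : ((n : ℝ) / Real.exp 1) ^ n = n ^ n * Real.exp (-n) := by
    rw [div_pow, ← Real.exp_nat_mul, mul_one, Real.exp_neg]; rfl
  rw [h5] at h3
  calc 2 * (√(n + 1 / 2) ^ (2 * n + 1) * Real.exp (-(n + 1 / 2 : ℝ)))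
      ≤ 2 * ((√n * n ^ n * Real.exp (1 / 2 + 1 / 4)) * Real.exp (-(n + 1 / 2 : ℝ))) := by gcongr
    _ = Real.exp (1 / 4) * ((2 * √n) * (n ^ n * Real.exp (-n))) := by
      have : Real.exp (1 / 2 + 1 / 4) * Real.exp (-(n + 1 / 2 : ℝ)) =
          Real.exp (1 / 4) * Real.exp (-n) := by
        rw [← Real.exp_add, ← Real.exp_add]; congr 1; ring
      linear_combination 2 * √n * n ^ n * this
    _ ≤ Real.exp (1 / 4) * (√(2 * Real.pi * n) * (n ^ n * Real.exp (-n))) := by gcongr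
    _ ≤ _ := by gcongr

lemma aux_P (n j m : ℕ) (hn : 1 ≤ n)
    (h : ∀ r : ℝ, (j : ℝ) ≤ r → r < j + 1 → (m : ℝ) ≤ |r - √(n + 1 / 2)|) :
    (1 / Real.pi) * ∫ z : ℂ, ‖z‖ ^ (2 * n) * annW j ‖z‖ ≤
      Real.exp (1 / 4) * Real.exp (-(m : ℝ) ^ 2) * n.factorial := by
  rw [integral_fun_norm_addHaar volume (fun r : ℝ => r ^ (2 * n) * annW j r)]
  have hv : (volume : Measure ℂ).real (Metric.ball 0 1) = Real.pi := by
    simp [Measure.real, Complex.volume_ball]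
  rw [hv, Complex.finrank_real_complex]
  set C := √(n + 1 / 2) ^ (2 * n + 1) * Real.exp (-(n + 1 / 2 : ℝ)) * Real.exp (-(m : ℝ) ^ 2)
    with hC
  have e : ∫ y in Set.Ioi (0 : ℝ), y ^ (2 - 1) • (y ^ (2 * n) * annW j y) =
      ∫ y in Set.Ioi (0 : ℝ) ∩ Set.Ico (j : ℝ) (j + 1), y ^ (2 * n + 1) * Real.exp (-y ^ 2) := by
    rw [← setIntegral_indicator measurableSet_Ico]
    congr 1
    ext y
    by_cases hy : y ∈ Set.Ico (j : ℝ) (j + 1)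
    · rw [annW, Set.indicator_of_mem hy, Set.indicator_of_mem hy, smul_eq_mul]
      ring
    · rw [annW, Set.indicator_of_notMem hy, Set.indicator_of_notMem hy]; simp
  have hvol : volume (Set.Ioi (0 : ℝ) ∩ Set.Ico (j : ℝ) (j + 1)) ≤ 1 := by
    refine (measure_mono Set.inter_subset_right).trans ?_
    simp
  have hC0 : 0 ≤ C := by positivity
  have hb : ∫ y in Set.Ioi (0 : ℝ) ∩ Set.Ico (j : ℝ) (j + 1),
      y ^ (2 * n + 1) * Real.exp (-y ^ 2) ≤ C := by
    refine (Real.le_norm_self _).trans ?_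
    refine (norm_setIntegral_le_of_norm_le_const (C := C)
      (hvol.trans_lt ENNReal.one_lt_top) ?_).trans ?_
    · rintro y ⟨hy0, hy1, hy2⟩
      have hy0' : (0 : ℝ) < y := hy0
      rw [Real.norm_of_nonneg (by positivity)]
      refine (aux_point n y hy0'.le).trans ?_
      rw [hC]
      have h7 := h y hy1 hy2
      rw [← sq_abs (y - _)]
      gcongr
    · have : volume.real (Set.Ioi (0 : ℝ) ∩ Set.Ico (j : ℝ) (j + 1)) ≤ 1 := by
        have := ENNReal.toReal_mono ENNReal.one_ne_top hvol
        simpa [Measure.real] using this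
      exact mul_le_of_le_one_right hC0 this
  rw [e]
  have h2 := aux_C n hn
  simp only [smul_eq_mul, nsmul_eq_mul]
  calc 1 / Real.pi * (((2 : ℕ) : ℝ) * (Real.pi * ∫ y in Set.Ioi (0 : ℝ) ∩ Set.Ico (j : ℝ) (j + 1),
        y ^ (2 * n + 1) * Real.exp (-y ^ 2)))
      = 2 * ∫ y in Set.Ioi (0 : ℝ) ∩ Set.Ico (j : ℝ) (j + 1),
        y ^ (2 * n + 1) * Real.exp (-y ^ 2) := by
        have := Real.pi_ne_zero
        push_cast; field_simp
    _ ≤ 2 * C := by gcongr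
    _ = 2 * (√(n + 1 / 2) ^ (2 * n + 1) * Real.exp (-(n + 1 / 2 : ℝ))) *
        Real.exp (-(m : ℝ) ^ 2) := by rw [hC]; ring
    _ ≤ Real.exp (1 / 4) * n.factorial * Real.exp (-(m : ℝ) ^ 2) := by gcongr
    _ = _ := by ring

lemma aux_hi (n j m : ℕ) (hj : j = n.sqrt + m + 1) (r : ℝ) (h1 : (j : ℝ) ≤ r) :
    (m : ℝ) ≤ |r - √(n + 1 / 2)| := by
  have h := Nat.succ_le_succ_sqrt' n
  have h' : ((n : ℝ) + 1) ≤ ((n.sqrt : ℝ) + 1) ^ 2 := by exact_mod_cast h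
  have : √((n : ℝ) + 1 / 2) ≤ n.sqrt + 1 := by
    apply Real.sqrt_le_iff.mpr
    exact ⟨by positivity, by linarith⟩
  have hj' : (j : ℝ) = n.sqrt + m + 1 := by exact_mod_cast hj
  exact le_trans (by linarith) (le_abs_self _)

lemma aux_lo (n j m : ℕ) (hj : j + m + 1 = n.sqrt) (r : ℝ) (h1 : r < (j : ℝ) + 1) :
    (m : ℝ) ≤ |r - √(n + 1 / 2)| := by
  have h := Nat.sqrt_le' n
  have h' : ((n.sqrt : ℝ)) ^ 2 ≤ n := by exact_mod_cast h
  have : (n.sqrt : ℝ) ≤ √((n : ℝ) + 1 / 2) := by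
    apply Real.le_sqrt_of_sq_le; linarith
  have hj' : (j : ℝ) + m + 1 = n.sqrt := by exact_mod_cast hj
  rw [abs_sub_comm]
  exact le_trans (by linarith) (le_abs_self _)

lemma aux_summable (M : ℕ) :
    Summable (fun m : ℕ => if M ≤ m then Real.exp (-(m : ℝ) ^ 2) else 0) := by
  refine Summable.of_nonneg_of_le (fun m => ?_) (fun m => ?_) (Real.summable_exp_neg_nat)
  · split_ifs <;> positivity
  · split_ifs
    · gcongr
      exact_mod_cast Nat.le_self_pow two_ne_zero m
    · positivity

lemma aux_half (M : ℕ) (T : Finset ℕ) (f : ℕ → ℕ) (hf : Set.InjOn f T)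
    (hT : ∀ j ∈ T, M ≤ f j) :
    ∑ j ∈ T, Real.exp (-(f j : ℝ) ^ 2) ≤
      ∑' m : ℕ, if M ≤ m then Real.exp (-(m : ℝ) ^ 2) else 0 := by
  calc ∑ j ∈ T, Real.exp (-(f j : ℝ) ^ 2)
      = ∑ j ∈ T, (fun m : ℕ => if M ≤ m then Real.exp (-(m : ℝ) ^ 2) else 0) (f j) := by
        refine Finset.sum_congr rfl fun j hj => ?_
        simp [hT j hj]
    _ = ∑ m ∈ T.image f, if M ≤ m then Real.exp (-(m : ℝ) ^ 2) else 0 :=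
        (Finset.sum_image (f := fun m : ℕ => if M ≤ m then Real.exp (-(m : ℝ) ^ 2) else 0) hf).symm
    _ ≤ _ := (aux_summable M).sum_le_tsum _ (fun m _ => by split_ifs <;> positivity)

lemma aux_n (M N n : ℕ) (hn : 1 ≤ n) :
    ∑ j ∈ (Finset.range N).filter (fun j : ℕ => ¬ ((n.sqrt : ℤ) - (j : ℤ)).natAbs ≤ M),
      (1 / Real.pi) * ∫ z : ℂ, ‖z‖ ^ (2 * n) * annW j ‖z‖ ≤ ηtail M * n.factorial := by
  set T := (Finset.range N).filter (fun j : ℕ => ¬ ((n.sqrt : ℤ) - (j : ℤ)).natAbs ≤ M) with hT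
  rw [← Finset.sum_filter_add_sum_filter_not T (fun j => n.sqrt < j)]
  have hA : ∑ j ∈ T.filter (fun j => n.sqrt < j),
      (1 / Real.pi) * ∫ z : ℂ, ‖z‖ ^ (2 * n) * annW j ‖z‖ ≤
      Real.exp (1 / 4) * n.factorial *
        ∑' m : ℕ, if M ≤ m then Real.exp (-(m : ℝ) ^ 2) else 0 := by
    calc _ ≤ ∑ j ∈ T.filter (fun j => n.sqrt < j), Real.exp (1 / 4) * n.factorial *
          Real.exp (-((j - n.sqrt - 1 : ℕ) : ℝ) ^ 2) := by
          refine Finset.sum_le_sum fun j hj => ?_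
          simp only [hT, Finset.mem_filter, Finset.mem_range] at hj
          refine (aux_P n j (j - n.sqrt - 1) hn fun r h1 _ =>
            aux_hi n j _ (by omega) r h1).trans_eq (by ring)
      _ ≤ _ := by
          rw [← Finset.mul_sum]
          gcongr
          refine aux_half M _ (fun j => j - n.sqrt - 1) ?_ ?_
          · intro x hx y hy hxy
            simp only [hT, Finset.coe_filter, Finset.mem_filter, Set.mem_ofPred_eq] at hx hy hxy
            omega
          · intro j hj
            simp only [hT, Finset.mem_filter] at hj
            omega
  have hB : ∑ j ∈ T.filter (fun j => ¬ n.sqrt < j),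
      (1 / Real.pi) * ∫ z : ℂ, ‖z‖ ^ (2 * n) * annW j ‖z‖ ≤
      Real.exp (1 / 4) * n.factorial *
        ∑' m : ℕ, if M ≤ m then Real.exp (-(m : ℝ) ^ 2) else 0 := by
    calc _ ≤ ∑ j ∈ T.filter (fun j => ¬ n.sqrt < j), Real.exp (1 / 4) * n.factorial *
          Real.exp (-((n.sqrt - j - 1 : ℕ) : ℝ) ^ 2) := by
          refine Finset.sum_le_sum fun j hj => ?_
          simp only [hT, Finset.mem_filter, Finset.mem_range] at hj
          refine (aux_P n j (n.sqrt - j - 1) hn fun r _ h1 =>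
            aux_lo n j _ (by omega) r h1).trans_eq (by ring)
      _ ≤ _ := by
          rw [← Finset.mul_sum]
          gcongr
          refine aux_half M _ (fun j => n.sqrt - j - 1) ?_ ?_
          · intro x hx y hy hxy
            simp only [hT, Finset.coe_filter, Finset.mem_filter, Set.mem_ofPred_eq] at hx hy hxy
            omega
          · intro j hj
            simp only [hT, Finset.mem_filter] at hj
            omega
  calc _ ≤ _ := add_le_add hA hB
    _ = _ := by rw [ηtail]; ring

lemma aux_R (M D j : ℕ) (a : ℕ → ℂ) (z : ℂ) :
    (∑ n ∈ Finset.Icc 1 D, a n * z ^ n) - Vpart M D j a z =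
      ∑ n ∈ (Finset.Icc 1 D).filter (fun n => ¬ ((n.sqrt : ℤ) - (j : ℤ)).natAbs ≤ M),
        a n * z ^ n := by
  rw [sub_eq_iff_eq_add', ← Finset.sum_filter_add_sum_filter_not (Finset.Icc 1 D)
    (fun n => ((n.sqrt : ℤ) - (j : ℤ)).natAbs ≤ M)]
  congr 1
  unfold Vpart Ublock
  rw [← Finset.sum_fiberwise_of_maps_to (t := (Finset.range (j + M + 1)).filter
      (fun ℓ : ℕ => 1 ≤ ℓ ∧ ((ℓ : ℤ) - (j : ℤ)).natAbs ≤ M)) (g := Nat.sqrt)]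
  · refine Finset.sum_congr rfl fun l hl => Finset.sum_congr ?_ fun _ _ => rfl
    ext n
    simp only [Finset.mem_filter, Finset.mem_Icc, Finset.mem_range] at hl ⊢
    rw [← Nat.eq_sqrt']
    constructor
    · rintro ⟨⟨h1, h2⟩, h3⟩
      exact ⟨h1, h3.symm⟩
    · rintro ⟨h1, h3⟩
      exact ⟨⟨h1, h3 ▸ hl.2.2⟩, h3.symm⟩
  · intro n hn
    simp only [Finset.mem_filter, Finset.mem_Icc, Finset.mem_range] at hn ⊢
    have := Nat.sqrt_pos.mpr (show 0 < n by omega)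
    omega

/-- **Total leakage estimate.** For `M ≥ 2`, with `U(z) = Σ_{n=1}^D a_n zⁿ`,
`V_j` as above and `R_j = U − V_j`, one has
`Σ_{j ≥ 0} (1/π) ∫_{j ≤ |z| < j+1} |R_j|² e^{−|z|²} dm ≤ η_M ‖U‖_F²`. -/
theorem stmt12 (M : ℕ) (hM : 2 ≤ M) (D : ℕ) (hD : 1 ≤ D) (a : ℕ → ℂ) :
    (∑' j : ℕ, (1 / Real.pi) *
        ∫ z in {z : ℂ | (j : ℝ) ≤ ‖z‖ ∧ ‖z‖ < (j : ℝ) + 1},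
          ‖(∑ n ∈ Finset.Icc 1 D, a n * z ^ n) - Vpart M D j a z‖ ^ 2 *
            Real.exp (-‖z‖ ^ 2))
      ≤ ηtail M * (fockNorm (fun z => ∑ n ∈ Finset.Icc 1 D, a n * z ^ n)) ^ 2 := by
  have hU : (fockNorm (fun z => ∑ n ∈ Finset.Icc 1 D, a n * z ^ n)) ^ 2 =
      ∑ n ∈ Finset.Icc 1 D, ‖a n‖ ^ 2 * n.factorial := by
    have h1 := aux_ortho (fun r => Real.exp (-r ^ 2)) aux_int (Finset.Icc 1 D) a
    simp only [aux_full] at h1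
    unfold fockNorm
    rw [Real.sq_sqrt (mul_nonneg (by positivity) (integral_nonneg fun z => by positivity)), h1,
      Finset.mul_sum]
    refine Finset.sum_congr rfl fun n _ => ?_
    have := Real.pi_ne_zero
    field_simp
  rw [hU]
  refine Real.tsum_le_of_sum_range_le (fun j => ?_) fun N => ?_
  · exact mul_nonneg (by positivity) (integral_nonneg fun z => by positivity)
  have hj : ∀ j : ℕ, (1 / Real.pi) *
        ∫ z in {z : ℂ | (j : ℝ) ≤ ‖z‖ ∧ ‖z‖ < (j : ℝ) + 1},
          ‖(∑ n ∈ Finset.Icc 1 D, a n * z ^ n) - Vpart M D j a z‖ ^ 2 *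
            Real.exp (-‖z‖ ^ 2) =
      ∑ n ∈ Finset.Icc 1 D, if ¬ ((n.sqrt : ℤ) - (j : ℤ)).natAbs ≤ M then
        ‖a n‖ ^ 2 * ((1 / Real.pi) * ∫ z : ℂ, ‖z‖ ^ (2 * n) * annW j ‖z‖) else 0 := by
    intro j
    simp only [aux_R]
    rw [annW_eq j (fun z => ‖∑ n ∈ (Finset.Icc 1 D).filter
      (fun n => ¬ ((n.sqrt : ℤ) - (j : ℤ)).natAbs ≤ M), a n * z ^ n‖ ^ 2),
      aux_ortho (annW j) (annW_int j), Finset.mul_sum, Finset.sum_filter]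
    refine Finset.sum_congr rfl fun n _ => ?_
    split_ifs
    · rfl
    · ring
  simp only [hj]
  rw [Finset.sum_comm, Finset.mul_sum]
  refine Finset.sum_le_sum fun n hn => ?_
  rw [← Finset.sum_filter, ← Finset.mul_sum]
  have := aux_n M N n (Finset.mem_Icc.mp hn).1
  calc _ ≤ ‖a n‖ ^ 2 * (ηtail M * n.factorial) := by gcongr
    _ = _ := by ring
end

section
/- Let M = 5. Let D ≥ 1, let a₁, …, a_D ∈ ℂ, for ℓ ≥ 1 set U_ℓ(z) = Σ_{n ∈ I_ℓ, n ≤ D} a_n z^n where I_ℓ = {n ∈ ℕ : ℓ² ≤ n < (ℓ+1)²}, and for j ≥ 0 set V_j = Σ_{1 ≤ ℓ, |ℓ−j| ≤ 5} U_ℓ. Then for every integer j ≥ 0 and every r ∈ [j, j+1], ∫_{S¹} |V_j(rζ)|² dσ(ζ) ≤ 1620² ∫_{S¹} ρ(V_j(rζ))² dσ(ζ). -/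
open MeasureTheory

namespace Aux

/-- trigonometric polynomial -/
noncomputable def P (S : Finset ℕ) (b : ℕ → ℂ) (t : ℝ) : ℂ :=
  ∑ n ∈ S, b n * Complex.exp ((n : ℂ) * t * Complex.I)

lemma P_cont (S : Finset ℕ) (b : ℕ → ℂ) : Continuous (P S b) := by
  unfold P; fun_prop

lemma P_periodic (S : Finset ℕ) (b : ℕ → ℂ) : Function.Periodic (P S b) (2 * Real.pi) := by
  intro t
  unfold P
  refine Finset.sum_congr rfl fun n _ => ?_
  congr 1
  have : (n : ℂ) * ((t + 2 * Real.pi : ℝ) : ℂ) * Complex.I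
      = (n : ℂ) * t * Complex.I + (n : ℂ) * (2 * Real.pi * Complex.I) := by
    push_cast; ring
  rw [this, Complex.exp_add, Complex.exp_nat_mul_two_pi_mul_I, mul_one]

lemma rho_cont : Continuous ρ := by
  unfold ρ; fun_prop

lemma int_exp (k : ℤ) (hk : k ≠ 0) :
    ∫ t in (0 : ℝ)..(2 * Real.pi), Complex.exp ((k : ℂ) * t * Complex.I) = 0 := by
  have hc : ((k : ℂ) * Complex.I) ≠ 0 := by
    simp [hk]
  have h := integral_exp_mul_complex (a := 0) (b := 2 * Real.pi) hc
  have h2 : (fun t : ℝ => Complex.exp ((k : ℂ) * t * Complex.I))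
      = fun t : ℝ => Complex.exp ((k : ℂ) * Complex.I * t) := by
    funext t; congr 1; ring
  rw [h2, h]
  have : (k : ℂ) * Complex.I * ((2 * Real.pi : ℝ) : ℂ) = (k : ℂ) * (2 * Real.pi * Complex.I) := by
    push_cast; ring
  rw [this, Complex.exp_int_mul_two_pi_mul_I]
  simp

lemma int_re (f : ℝ → ℂ) (hf : Continuous f) :
    ∫ t in (0 : ℝ)..(2 * Real.pi), (f t).re = (∫ t in (0 : ℝ)..(2 * Real.pi), f t).re := by
  have := (Complex.reCLM).intervalIntegral_comp_comm (μ := volume)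
    (hf.intervalIntegrable 0 (2 * Real.pi))
  simpa using this

lemma int_P (S : Finset ℕ) (b : ℕ → ℂ) (hS : ∀ n ∈ S, 1 ≤ n) :
    ∫ t in (0 : ℝ)..(2 * Real.pi), (P S b t).re = 0 := by
  rw [int_re _ (P_cont S b)]
  unfold P
  rw [intervalIntegral.integral_finsetSum]
  · rw [Finset.sum_eq_zero, Complex.zero_re]
    intro n hn
    rw [intervalIntegral.integral_const_mul]
    have := int_exp (n : ℤ) (by have := hS n hn; omega)
    push_cast at this
    rw [this, mul_zero]
  · intro n _
    apply Continuous.intervalIntegrable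
    fun_prop

lemma int_P_sq (S : Finset ℕ) (b : ℕ → ℂ) (hS : ∀ n ∈ S, 1 ≤ n) :
    ∫ t in (0 : ℝ)..(2 * Real.pi), ((P S b t) ^ 2).re = 0 := by
  rw [int_re (fun t => P S b t ^ 2) ((P_cont S b).pow 2)]
  have h : ∀ t, P S b t ^ 2 = ∑ n ∈ S, ∑ m ∈ S, (b n * b m) *
      Complex.exp ((((n : ℤ) + (m : ℤ) : ℤ) : ℂ) * t * Complex.I) := by
    intro t
    unfold P
    rw [sq, Finset.sum_mul_sum]
    refine Finset.sum_congr rfl fun n _ => Finset.sum_congr rfl fun m _ => ?_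
    push_cast
    rw [add_mul, add_mul, Complex.exp_add]; ring
  simp only [h]
  rw [intervalIntegral.integral_finsetSum]
  · rw [Finset.sum_eq_zero, Complex.zero_re]
    intro n hn
    rw [intervalIntegral.integral_finsetSum]
    · refine Finset.sum_eq_zero fun m hm => ?_
      rw [intervalIntegral.integral_const_mul, int_exp _ (by have := hS n hn; omega), mul_zero]
    · intro m _
      apply Continuous.intervalIntegrable
      fun_prop
  · intro n _
    apply Continuous.intervalIntegrable
    fun_prop

lemma parseval (S : Finset ℕ) (b : ℕ → ℂ) :
    ∫ t in (0 : ℝ)..(2 * Real.pi), ‖P S b t‖ ^ 2 = 2 * Real.pi * ∑ n ∈ S, ‖b n‖ ^ 2 := by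
  have h : ∀ t, ((‖P S b t‖ ^ 2 : ℝ)) = (∑ n ∈ S, ∑ m ∈ S, (b n * (starRingEnd ℂ) (b m)) *
      Complex.exp ((((n : ℤ) - (m : ℤ) : ℤ) : ℂ) * t * Complex.I)).re := by
    intro t
    have h1 : ((‖P S b t‖ ^ 2 : ℝ) : ℂ) = ∑ n ∈ S, ∑ m ∈ S, (b n * (starRingEnd ℂ) (b m)) *
      Complex.exp ((((n : ℤ) - (m : ℤ) : ℤ) : ℂ) * t * Complex.I) := by
      push_cast
      rw [← Complex.mul_conj']
      unfold P
      rw [map_sum, Finset.sum_mul_sum]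
      refine Finset.sum_congr rfl fun n _ => Finset.sum_congr rfl fun m _ => ?_
      rw [map_mul, ← Complex.exp_conj]
      simp only [map_mul, Complex.conj_I, Complex.conj_ofReal, Complex.conj_natCast]
      rw [sub_mul, sub_mul, sub_eq_add_neg, Complex.exp_add]; 
      rw [mul_neg]; ring
    rw [← h1, Complex.ofReal_re]
  simp only [h]
  rw [int_re _ (by fun_prop)]
  rw [intervalIntegral.integral_finsetSum]
  · rw [Finset.mul_sum, Complex.re_sum]
    refine Finset.sum_congr rfl fun n hn => ?_
    rw [intervalIntegral.integral_finsetSum]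
    · rw [Finset.sum_eq_single n]
      · rw [intervalIntegral.integral_const_mul, Complex.mul_conj']
        simp
        norm_cast
        ring
      · intro m _ hm
        rw [intervalIntegral.integral_const_mul, int_exp _ (by omega), mul_zero]
      · intro h; exact absurd hn h
    · intro m _
      apply Continuous.intervalIntegrable
      fun_prop
  · intro n _
    apply Continuous.intervalIntegrable
    fun_prop

lemma rho_sq_re (w : ℂ) : ‖1 + w‖ ^ 2 = 1 + 2 * w.re + ‖w‖ ^ 2 := by
  rw [← Complex.normSq_eq_norm_sq, ← Complex.normSq_eq_norm_sq, Complex.normSq_apply,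
    Complex.normSq_apply]
  simp; ring

lemma rho_F (w : ℂ) : (2 * w.re + ‖w‖ ^ 2) ^ 2 ≤ (2 + ‖w‖) ^ 2 * ρ w ^ 2 := by
  have h := rho_sq_re w
  have h1 : 2 * w.re + ‖w‖ ^ 2 = (‖1 + w‖ - 1) * (‖1 + w‖ + 1) := by nlinarith
  have h2 : ‖1 + w‖ ≤ 1 + ‖w‖ := by simpa using norm_add_le (1 : ℂ) w
  have h3 := norm_nonneg (1 + w)
  rw [h1, ρ, sq_abs, mul_pow, mul_comm]
  apply mul_le_mul_of_nonneg_right _ (sq_nonneg _)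
  apply pow_le_pow_left₀ (by linarith)
  linarith

lemma rho_lip (w z : ℂ) : ρ w ≤ ρ z + ‖z - w‖ := by
  unfold ρ
  have h := abs_norm_sub_norm_le (1 + w) (1 + z)
  have e : (1 + w) - (1 + z) = -(z - w) := by ring
  rw [e, norm_neg] at h
  have := abs_sub_abs_le_abs_sub (‖1 + w‖ - 1) (‖1 + z‖ - 1)
  have e2 : ‖1 + w‖ - 1 - (‖1 + z‖ - 1) = ‖1 + w‖ - ‖1 + z‖ := by ring
  rw [e2] at this
  linarith

lemma rho_four (w : ℂ) : (4 / 3) * ‖w‖ ^ 2 ≤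
    ∑ k ∈ Finset.range 4, ρ (Complex.I ^ k * w) ^ 2 := by
  have hn : ∀ k : ℕ, ‖Complex.I ^ k * w‖ = ‖w‖ := by intro k; simp
  have h := fun k : ℕ => rho_F (Complex.I ^ k * w)
  simp only [hn] at h
  have h0 := h 0
  have h1 := h 1
  have h2 := h 2
  have h3 := h 3
  have hw : ‖w‖ ^ 2 = w.re ^ 2 + w.im ^ 2 := by
    rw [← Complex.normSq_eq_norm_sq, Complex.normSq_apply]; ring
  have e0 : (Complex.I ^ 0 * w).re = w.re := by simp
  have e1 : (Complex.I ^ 1 * w).re = -w.im := by simp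
  have e2 : (Complex.I ^ 2 * w).re = -w.re := by simp
  have e3 : (Complex.I ^ 3 * w).re = w.im := by simp [Complex.I_pow_three]
  rw [e0] at h0
  rw [e1] at h1
  rw [e2] at h2
  rw [e3] at h3
  simp only [Finset.sum_range_succ, Finset.sum_range_zero, zero_add]
  set G := ρ (Complex.I ^ 0 * w) ^ 2 + ρ (Complex.I ^ 1 * w) ^ 2 + ρ (Complex.I ^ 2 * w) ^ 2
    + ρ (Complex.I ^ 3 * w) ^ 2 with hG
  have hs : 8 * ‖w‖ ^ 2 + 4 * (‖w‖ ^ 2) ^ 2 ≤ (2 + ‖w‖) ^ 2 * G := by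
    have : (2 * w.re + ‖w‖ ^ 2) ^ 2 + (2 * -w.im + ‖w‖ ^ 2) ^ 2 + (2 * -w.re + ‖w‖ ^ 2) ^ 2
      + (2 * w.im + ‖w‖ ^ 2) ^ 2 = 8 * (w.re ^ 2 + w.im ^ 2) + 4 * (‖w‖ ^ 2) ^ 2 := by ring
    rw [← hw] at this
    rw [hG]; linarith
  have hA := norm_nonneg w
  have hpos : 0 < (2 + ‖w‖) ^ 2 := by positivity
  refine le_of_mul_le_mul_left (le_trans ?_ hs) hpos
  nlinarith [mul_nonneg (sq_nonneg ‖w‖) (sq_nonneg (‖w‖ - 1))]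

lemma int_shift (S : Finset ℕ) (b : ℕ → ℂ) (θ : ℝ) :
    ∫ t in (0 : ℝ)..(2 * Real.pi), ρ (P S b (t + θ)) ^ 2 =
    ∫ t in (0 : ℝ)..(2 * Real.pi), ρ (P S b t) ^ 2 := by
  have hp : Function.Periodic (fun t => ρ (P S b t) ^ 2) (2 * Real.pi) := by
    intro t
    simp only [P_periodic S b t]
  rw [intervalIntegral.integral_comp_add_right (fun t => ρ (P S b t) ^ 2)]
  have := hp.intervalIntegral_add_eq θ 0
  rw [zero_add] at *
  rw [add_comm]
  exact this

lemma shift_sub (S : Finset ℕ) (b : ℕ → ℂ) (θ : ℝ) (c : ℂ) (t : ℝ) :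
    P S b (t + θ) - c * P S b t =
      P S (fun n => b n * (Complex.exp ((n : ℂ) * θ * Complex.I) - c)) t := by
  unfold P
  rw [Finset.mul_sum, ← Finset.sum_sub_distrib]
  refine Finset.sum_congr rfl fun n _ => ?_
  push_cast
  rw [mul_add, add_mul, Complex.exp_add]; ring

lemma sum_eps (S : Finset ℕ) (b : ℕ → ℂ) (d : ℕ → ℂ) (ε : ℝ)
    (h : ∀ n ∈ S, ‖d n‖ ^ 2 ≤ ε) :
    ∑ n ∈ S, ‖b n * d n‖ ^ 2 ≤ ε * ∑ n ∈ S, ‖b n‖ ^ 2 := by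
  rw [Finset.mul_sum]
  refine Finset.sum_le_sum fun n hn => ?_
  rw [norm_mul, mul_pow, mul_comm]
  exact mul_le_mul_of_nonneg_right (h n hn) (by positivity)

/-- many frequencies, concentrated near `m` -/
lemma large (S : Finset ℕ) (b : ℕ → ℂ) (m : ℝ) (hm : 0 < m)
    (hS : ∀ n ∈ S, 16 * |(n : ℝ) - m| ≤ m) :
    ∫ t in (0 : ℝ)..(2 * Real.pi), ‖P S b t‖ ^ 2 ≤
    1620 ^ 2 * ∫ t in (0 : ℝ)..(2 * Real.pi), ρ (P S b t) ^ 2 := by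
  have hpi := Real.pi_pos
  set v := ∫ t in (0 : ℝ)..(2 * Real.pi), ‖P S b t‖ ^ 2 with hv
  set s := ∫ t in (0 : ℝ)..(2 * Real.pi), ρ (P S b t) ^ 2 with hs
  have hcP := P_cont S b
  have hcr := rho_cont
  have hs0 : 0 ≤ s := intervalIntegral.integral_nonneg (by positivity) (fun t _ => by positivity)
  have hv0 : 0 ≤ v := intervalIntegral.integral_nonneg (by positivity) (fun t _ => by positivity)
  have key : ∀ k ∈ Finset.range 4,
      ∫ t in (0 : ℝ)..(2 * Real.pi), ρ (Complex.I ^ k * P S b t) ^ 2 ≤ 2 * s + 2 * (0.1 * v) := by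
    intro k hk
    set θ : ℝ := k * (Real.pi / (2 * m)) with hθ
    set d : ℕ → ℂ := fun n => Complex.exp ((n : ℂ) * θ * Complex.I) - Complex.I ^ k with hd
    have h1 : ∫ t in (0 : ℝ)..(2 * Real.pi), ‖P S b (t + θ) - Complex.I ^ k * P S b t‖ ^ 2
        ≤ 0.1 * v := by
      simp only [shift_sub]
      rw [hv, parseval, parseval]
      have := sum_eps S b d 0.1 (by
        intro n hn
        have e : Complex.I ^ k = Complex.exp (((m * θ : ℝ) : ℂ) * Complex.I) := by
          have : ((m * θ : ℝ) : ℂ) * Complex.I = (k : ℂ) * (Real.pi / 2 * Complex.I) := by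
            have : m * θ = k * (Real.pi / 2) := by rw [hθ]; field_simp
            rw [this]; push_cast; ring
          rw [this, Complex.exp_nat_mul, Complex.exp_pi_div_two_mul_I]
        have e2 : d n = Complex.exp (((m * θ : ℝ) : ℂ) * Complex.I) *
            (Complex.exp (Complex.I * (((n - m) * θ : ℝ) : ℂ)) - 1) := by
          rw [hd]; simp only
          rw [e, mul_sub, ← Complex.exp_add, mul_one]
          congr 2
          push_cast; ring
        have e3 : ‖d n‖ ≤ |((n : ℝ) - m) * θ| := by
          rw [e2, norm_mul, Complex.norm_exp_ofReal_mul_I, one_mul]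
          exact Real.norm_exp_I_mul_ofReal_sub_one_le
        have e4 : |((n : ℝ) - m) * θ| ≤ 0.3 := by
          have hk3 : (k : ℝ) ≤ 3 := by
            have := Finset.mem_range.1 hk
            exact_mod_cast (by omega : k ≤ 3)
          have hθ0 : 0 ≤ θ := by rw [hθ]; positivity
          have hθm : m * θ = k * (Real.pi / 2) := by rw [hθ]; field_simp
          rw [abs_mul, abs_of_nonneg hθ0]
          have := mul_le_mul_of_nonneg_right (hS n hn) hθ0
          have hp := Real.pi_lt_d2
          have : (k : ℝ) * (Real.pi / 2) ≤ 3 * (3.15 / 2) := by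
            gcongr
          nlinarith
        have := norm_nonneg (d n)
        nlinarith)
      nlinarith
    have h2 : ∫ t in (0 : ℝ)..(2 * Real.pi), ρ (Complex.I ^ k * P S b t) ^ 2 ≤
        ∫ t in (0 : ℝ)..(2 * Real.pi), (2 * ρ (P S b (t + θ)) ^ 2 +
          2 * ‖P S b (t + θ) - Complex.I ^ k * P S b t‖ ^ 2) := by
      apply intervalIntegral.integral_mono_on (by positivity)
      · apply Continuous.intervalIntegrable; fun_prop
      · apply Continuous.intervalIntegrable; fun_prop
      · intro t _
        have h := rho_lip (Complex.I ^ k * P S b t) (P S b (t + θ))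
        have h0 : 0 ≤ ρ (Complex.I ^ k * P S b t) := abs_nonneg _
        nlinarith [sq_nonneg (ρ (P S b (t + θ)) - ‖P S b (t + θ) - Complex.I ^ k * P S b t‖)]
    rw [intervalIntegral.integral_add, intervalIntegral.integral_const_mul,
      intervalIntegral.integral_const_mul, int_shift] at h2
    · linarith
    · apply Continuous.intervalIntegrable; fun_prop
    · apply Continuous.intervalIntegrable; fun_prop
  have h4 : ∫ t in (0 : ℝ)..(2 * Real.pi), (4 / 3) * ‖P S b t‖ ^ 2 ≤
      ∫ t in (0 : ℝ)..(2 * Real.pi), ∑ k ∈ Finset.range 4, ρ (Complex.I ^ k * P S b t) ^ 2 := by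
    apply intervalIntegral.integral_mono_on (by positivity)
    · apply Continuous.intervalIntegrable; fun_prop
    · apply Continuous.intervalIntegrable; fun_prop
    · intro t _
      exact rho_four _
  rw [intervalIntegral.integral_const_mul, intervalIntegral.integral_finsetSum] at h4
  · have := Finset.sum_le_sum key
    rw [Finset.sum_const, Finset.card_range, nsmul_eq_mul] at this
    norm_num at this
    linarith
  · intro k _
    apply Continuous.intervalIntegrable; fun_prop

lemma sup_bound (S : Finset ℕ) (b : ℕ → ℂ) (t : ℝ) :
    ‖P S b t‖ ^ 2 ≤ S.card * ∑ n ∈ S, ‖b n‖ ^ 2 := by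
  have h1 : ‖P S b t‖ ≤ ∑ n ∈ S, ‖b n‖ := by
    unfold P
    refine (norm_sum_le _ _).trans (Finset.sum_le_sum fun n _ => ?_)
    rw [norm_mul]
    have : (n : ℂ) * t * Complex.I = ((n * t : ℝ) : ℂ) * Complex.I := by push_cast; ring
    rw [this, Complex.norm_exp_ofReal_mul_I, mul_one]
  calc ‖P S b t‖ ^ 2 ≤ (∑ n ∈ S, ‖b n‖) ^ 2 := by gcongr
    _ ≤ _ := sq_sum_le_card_mul_sum_sq

/-- bounded degree -/
lemma small (S : Finset ℕ) (b : ℕ → ℂ) (hS : ∀ n ∈ S, 1 ≤ n) (hc : S.card ≤ 206 ^ 2) :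
    ∫ t in (0 : ℝ)..(2 * Real.pi), ‖P S b t‖ ^ 2 ≤
    1620 ^ 2 * ∫ t in (0 : ℝ)..(2 * Real.pi), ρ (P S b t) ^ 2 := by
  have hpi := Real.pi_pos
  by_contra! hlt
  set v := ∫ t in (0 : ℝ)..(2 * Real.pi), ‖P S b t‖ ^ 2 with hv
  set s := ∫ t in (0 : ℝ)..(2 * Real.pi), ρ (P S b t) ^ 2 with hs
  have hcP := P_cont S b
  have hcr := rho_cont
  have hs0 : 0 ≤ s := intervalIntegral.integral_nonneg (by positivity) (fun t _ => by positivity)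
  have hP := parseval S b
  rw [← hv] at hP
  set q := ∑ n ∈ S, ‖b n‖ ^ 2 with hq
  have hq0 : 0 ≤ q := by positivity
  -- first step : `v ≤ s + 2∫g`, linearised
  have step : ∀ c : ℝ, 0 < c → v ≤ s + c * s + 2 * Real.pi / c := by
    intro c hc0
    have h1 : ∫ t in (0 : ℝ)..(2 * Real.pi), (‖P S b t‖ ^ 2 + 2 * (P S b t).re) ≤
        ∫ t in (0 : ℝ)..(2 * Real.pi), ((1 + c) * ρ (P S b t) ^ 2 + 1 / c) := by
      apply intervalIntegral.integral_mono_on (by positivity)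
      · apply Continuous.intervalIntegrable; fun_prop
      · apply Continuous.intervalIntegrable; fun_prop
      · intro t _
        have h := rho_sq_re (P S b t)
        unfold ρ
        rw [sq_abs]
        set x := ‖1 + P S b t‖
        have : 2 * (x - 1) ≤ c * (x - 1) ^ 2 + 1 / c := by
          have : c * (x - 1) ^ 2 + 1 / c - 2 * (x - 1) = (c * (x - 1) - 1) ^ 2 / c := by
            field_simp; ring
          have : 0 ≤ (c * (x - 1) - 1) ^ 2 / c := by positivity
          linarith
        nlinarith
    rw [intervalIntegral.integral_add, intervalIntegral.integral_const_mul, int_P S b hS,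
      intervalIntegral.integral_add, intervalIntegral.integral_const_mul,
      intervalIntegral.integral_const] at h1
    · rw [smul_eq_mul] at h1
      have : (2 * Real.pi - 0) * (1 / c) = 2 * Real.pi / c := by ring
      linarith
    all_goals apply Continuous.intervalIntegrable; fun_prop
  -- smallness of q
  have hq1 : q ≤ 1 / 800 ^ 2 := by
    have h := step 1620 (by norm_num)
    by_contra! hcon
    have hsq : s < 2 * Real.pi * q / 1620 ^ 2 := by
      rw [lt_div_iff₀ (by norm_num)]; linarith
    have hqpos : 0 < q := lt_of_le_of_lt' hcon.le (by norm_num)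
    -- use optimal c
    have h2 := step (1620 / Real.sqrt q) (by positivity)
    set y := Real.sqrt q with hy
    have hy0 : 0 < y := Real.sqrt_pos.2 hqpos
    have hyq : y ^ 2 = q := Real.sq_sqrt hq0
    have hy1 : 1 / 800 < y := by
      rw [hy]; apply Real.lt_sqrt_of_sq_lt; norm_num at hcon ⊢; exact hcon
    have h3 : 1620 / y * s ≤ 2 * Real.pi * y / 1620 := by
      have : 1620 / y * s ≤ 1620 / y * (2 * Real.pi * q / 1620 ^ 2) := by gcongr
      refine this.trans (le_of_eq ?_)
      rw [← hyq]; field_simp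
    have h4 : 2 * Real.pi / (1620 / y) = 2 * Real.pi * y / 1620 := by field_simp
    rw [h4] at h2
    have h5 : 2 * Real.pi * y ^ 2 ≤ 2 * Real.pi * (y ^ 2 / 1620 ^ 2 + 2 * y / 1620) := by
      rw [← hyq] at hP hsq
      calc _ = v := hP.symm
        _ ≤ _ := h2
        _ ≤ 2 * Real.pi * y ^ 2 / 1620 ^ 2 + 2 * Real.pi * y / 1620
            + 2 * Real.pi * y / 1620 := by linarith
        _ = _ := by ring
    have h6 := le_of_mul_le_mul_left h5 (by positivity)
    nlinarith
  have hsup : ∀ t, ‖P S b t‖ ≤ 0.26 := by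
    intro t
    have h := sup_bound S b t
    have hc' : (S.card : ℝ) ≤ 206 ^ 2 := by exact_mod_cast hc
    have : (S.card : ℝ) * q ≤ 206 ^ 2 * (1 / 800 ^ 2) := by gcongr
    refine abs_le_of_sq_le_sq' (le_trans h (this.trans (by norm_num))) (by norm_num) |>.2
  have h1 : ∫ t in (0 : ℝ)..(2 * Real.pi), (2 * ‖P S b t‖ ^ 2 + 2 * (P S b t ^ 2).re) ≤
      ∫ t in (0 : ℝ)..(2 * Real.pi), (12 * ρ (P S b t) ^ 2 + 0.2 * ‖P S b t‖ ^ 2) := by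
    apply intervalIntegral.integral_mono_on (by positivity)
    · apply Continuous.intervalIntegrable; fun_prop
    · apply Continuous.intervalIntegrable; fun_prop
    · intro t _
      have h := rho_F (P S b t)
      have hk := hsup t
      set w := P S b t
      have hw0 := norm_nonneg w
      have hw : ‖w‖ ^ 2 = w.re ^ 2 + w.im ^ 2 := by
        rw [← Complex.normSq_eq_norm_sq, Complex.normSq_apply]; ring
      have hre : (w ^ 2).re = w.re ^ 2 - w.im ^ 2 := by
        rw [sq, Complex.mul_re]; ring
      have e : 2 * ‖w‖ ^ 2 + 2 * (w ^ 2).re = 4 * w.re ^ 2 := by rw [hre, hw]; ring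
      rw [e]
      have h2 : (2 + ‖w‖) ^ 2 * ρ w ^ 2 ≤ 6 * ρ w ^ 2 := by
        apply mul_le_mul_of_nonneg_right _ (sq_nonneg _)
        nlinarith
      have h3 : (‖w‖ ^ 2) ^ 2 ≤ 0.1 * ‖w‖ ^ 2 := by
        have : ‖w‖ ^ 2 ≤ 0.1 := by nlinarith
        nlinarith [sq_nonneg ‖w‖]
      nlinarith [sq_nonneg (2 * w.re + ‖w‖ ^ 2 + ‖w‖ ^ 2)]
  rw [intervalIntegral.integral_add, intervalIntegral.integral_const_mul,
    intervalIntegral.integral_const_mul, int_P_sq S b hS,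
    intervalIntegral.integral_add, intervalIntegral.integral_const_mul,
    intervalIntegral.integral_const_mul] at h1
  · linarith
  all_goals apply Continuous.intervalIntegrable; fun_prop

end Aux

/-- **Annulus estimate.** With `M = 5`: for every `j ≥ 0` and every `r ∈ [j, j+1]`,
`∫_{S¹} |V_j(rζ)|² dσ(ζ) ≤ 1620² ∫_{S¹} ρ(V_j(rζ))² dσ(ζ)`. -/
theorem stmt13 (D : ℕ) (hD : 1 ≤ D) (a : ℕ → ℂ) (j : ℕ) (r : ℝ)
    (hr₁ : (j : ℝ) ≤ r) (hr₂ : r ≤ (j : ℝ) + 1) :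
    circleAvg (fun t => ‖Vpart 5 D j a ((r : ℂ) * Complex.exp ((t : ℂ) * Complex.I))‖ ^ 2)
      ≤ 1620 ^ 2 *
        circleAvg (fun t =>
          (ρ (Vpart 5 D j a ((r : ℂ) * Complex.exp ((t : ℂ) * Complex.I)))) ^ 2) := by
  classical
  set A := (Finset.range (j + 5 + 1)).filter
      (fun ℓ : ℕ => 1 ≤ ℓ ∧ ((ℓ : ℤ) - (j : ℤ)).natAbs ≤ 5) with hA
  set B : ℕ → Finset ℕ := fun n => A.filter (fun ℓ => ℓ ^ 2 ≤ n ∧ n < (ℓ + 1) ^ 2) with hB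
  set b : ℕ → ℂ := fun n => (B n).card * (a n * (r : ℂ) ^ n) with hb
  set S := (Finset.Icc 1 D).filter (fun n => (B n).Nonempty) with hSdef
  have hS : ∀ n ∈ S, ∃ ℓ : ℕ, 1 ≤ ℓ ∧ ℓ ≤ j + 5 ∧ j ≤ ℓ + 5 ∧ ℓ ^ 2 ≤ n ∧ n < (ℓ + 1) ^ 2 := by
    intro n hn
    obtain ⟨ℓ, hℓ⟩ := (Finset.mem_filter.1 hn).2
    rw [hB] at hℓ
    simp only [hA, Finset.mem_filter, Finset.mem_range] at hℓ
    exact ⟨ℓ, by omega, by omega, by omega, hℓ.2⟩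
  have hV : ∀ t : ℝ, Vpart 5 D j a ((r : ℂ) * Complex.exp ((t : ℂ) * Complex.I))
      = Aux.P S b t := by
    intro t
    unfold Vpart Ublock Aux.P
    rw [← hA]
    simp only [Finset.sum_filter (s := Finset.Icc 1 D)]
    rw [Finset.sum_comm, hSdef, Finset.sum_filter]
    refine Finset.sum_congr rfl fun n _ => ?_
    rw [← Finset.sum_filter, Finset.sum_const, nsmul_eq_mul]
    change ((B n).card : ℂ) * _ = _
    split_ifs with h
    · rw [hb]
      simp only
      rw [mul_pow, ← Complex.exp_nat_mul, mul_assoc (n : ℂ)]; ring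
    · rw [Finset.not_nonempty_iff_eq_empty.1 h]; simp
  simp only [hV]
  unfold circleAvg
  rw [mul_left_comm]
  refine mul_le_mul_of_nonneg_left ?_ (by positivity)
  rcases le_or_gt 200 j with hj | hj
  · refine Aux.large S b ((j : ℝ) ^ 2) (by positivity) fun n hn => ?_
    obtain ⟨ℓ, h1, h2, h3, h4, h5⟩ := hS n hn
    have hjR : (200 : ℝ) ≤ j := by exact_mod_cast hj
    have h2R : (ℓ : ℝ) ≤ j + 5 := by exact_mod_cast h2
    have h3R : (j : ℝ) ≤ ℓ + 5 := by exact_mod_cast h3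
    have h4R : (ℓ : ℝ) ^ 2 ≤ n := by exact_mod_cast h4
    have h5R : (n : ℝ) ≤ (ℓ + 1) ^ 2 := by exact_mod_cast h5.le
    have hu : (n : ℝ) ≤ (j + 6) ^ 2 := h5R.trans (by gcongr ?_ ^ 2; linarith)
    have hl : ((j : ℝ) - 5) ^ 2 ≤ n := le_trans (by gcongr ?_ ^ 2 <;> linarith) h4R
    have : |(n : ℝ) - (j : ℝ) ^ 2| ≤ 12 * j + 36 := by
      rw [abs_le]; constructor <;> nlinarith
    nlinarith
  · refine Aux.small S b (fun n hn => (Finset.mem_Icc.1 (Finset.mem_filter.1 hn).1).1) ?_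
    have : S ⊆ Finset.range (206 ^ 2) := by
      intro n hn
      obtain ⟨ℓ, h1, h2, h3, h4, h5⟩ := hS n hn
      rw [Finset.mem_range]
      exact lt_of_lt_of_le h5 (Nat.pow_le_pow_left (by omega) 2)
    simpa using Finset.card_le_card this
end

section
/- Fix an integer d ≥ 1. There exists a constant M = M_d > 0 such that for every F in the Bargmann–Fock space F²(ℂ^d) one has inf_{|λ|=1} ‖F − λ·1‖_{F_d} ≤ M · ‖ |F| − 1 ‖_{F_d}, where the infimum is over unimodular complex scalars λ and 1 denotes the constant function one. -/
open MeasureTheory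

/-- The Gaussian (Fock) norm on `ℂ^d`:
`‖F‖_{F_d}² = (1/π^d) ∫_{ℂ^d} ‖F(z)‖² e^{−Σ_q |z_q|²} dm(z)`. -/
noncomputable def gammaNormD (d : ℕ) {E : Type*} [NormedAddCommGroup E]
    (F : (Fin d → ℂ) → E) : ℝ :=
  Real.sqrt ((1 / Real.pi ^ d) *
    ∫ z : Fin d → ℂ, ‖F z‖ ^ 2 * Real.exp (-∑ q, ‖z q‖ ^ 2))

namespace Fock
open Complex

/-- normalized Lebesgue measure on a period -/
noncomputable def nu : Measure ℝ :=
  ENNReal.ofReal (2 * Real.pi)⁻¹ • (volume.restrict (Set.Ioc 0 (2 * Real.pi)))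

/-- the unit circle parametrization -/
noncomputable def cm (θ : ℝ) : ℂ := circleMap 0 1 θ

lemma cm_cont : Continuous cm := continuous_circleMap 0 1

lemma norm_cm (θ : ℝ) : ‖cm θ‖ = 1 := by simp [cm]

instance : IsProbabilityMeasure nu := by
  constructor
  have h : (0:ℝ) < 2 * Real.pi := Real.two_pi_pos
  simp only [nu, Measure.smul_apply, smul_eq_mul, Measure.restrict_apply_univ, Real.volume_Ioc, sub_zero]
  rw [← ENNReal.ofReal_mul (by positivity), inv_mul_cancel₀ h.ne', ENNReal.ofReal_one]

lemma integrable_nu {E : Type*} [NormedAddCommGroup E] {f : ℝ → E} (hf : Continuous f) :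
    Integrable f nu := by
  unfold nu
  exact Integrable.smul_measure (hf.integrableOn_Ioc) ENNReal.ofReal_ne_top

lemma mean_value {f : ℂ → ℂ} (hf : Differentiable ℂ f) : ∫ θ, f (cm θ) ∂nu = f 0 := by
  have h := (hf.diffContOnCl (s := Metric.ball 0 |1|)).circleAverage
  rw [Real.circleAverage_def, intervalIntegral.integral_of_le Real.two_pi_pos.le] at h
  rw [← h]
  unfold nu
  rw [integral_smul_measure, ENNReal.toReal_ofReal (by positivity)]
  rfl

lemma exists_psi {f : ℂ → ℂ} (hf : Differentiable ℂ f) :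
    ∃ g : ℂ → ℂ, Differentiable ℂ g ∧ g 0 = deriv f 0 ∧ ∀ z, f z = f 0 + z * g z := by
  refine ⟨dslope f 0, ?_, by simp, fun z => ?_⟩
  · have := (Complex.differentiableOn_dslope (f := f) (c := 0) (s := Set.univ) Filter.univ_mem).2
      hf.differentiableOn
    exact differentiableOn_univ.1 this
  · have := sub_smul_dslope f 0 z
    simp at this
    rw [this]; ring

/-- Pointwise estimate on the unit circle around `0`. -/
lemma circle_est {f : ℂ → ℂ} (hf : Differentiable ℂ f) :
    ‖deriv f 0‖ ^ 2 ≤ (∫ θ, |‖f (cm θ)‖ ^ 2 - 1| ∂nu) + |‖f 0‖ ^ 2 - 1| ∧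
    ‖f 0‖ * ‖deriv f 0‖ ≤ 2 * (∫ θ, |‖f (cm θ)‖ ^ 2 - 1| ∂nu) + |‖f 0‖ ^ 2 - 1| := by
  obtain ⟨g, hg, hg0, hfg⟩ := exists_psi hf
  have hcf := hf.continuous
  have hcg := hg.continuous
  have hcm := cm_cont
  set B := ∫ θ, |‖f (cm θ)‖ ^ 2 - 1| ∂nu with hB
  set K := ∫ θ, ‖g (cm θ)‖ ^ 2 ∂nu with hK
  -- K = avg P - P(0)
  have hK1 : ∫ θ, (‖f (cm θ)‖ ^ 2 - 1) ∂nu = (‖f 0‖ ^ 2 - 1) + K := by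
    have h1 : ∀ θ, ‖f (cm θ)‖ ^ 2 - 1 = (‖f 0‖ ^ 2 - 1) + ‖g (cm θ)‖ ^ 2
        + 2 * ((starRingEnd ℂ (f 0)) * (cm θ * g (cm θ))).re := by
      intro θ
      have hn : ‖cm θ * g (cm θ)‖ ^ 2 = ‖g (cm θ)‖ ^ 2 := by rw [norm_mul, norm_cm, one_mul]
      rw [← hn, hfg (cm θ), Complex.sq_norm, Complex.sq_norm, Complex.sq_norm, Complex.normSq_add]
      have : (f 0 * (starRingEnd ℂ) (cm θ * g (cm θ))).re = ((starRingEnd ℂ (f 0)) * (cm θ * g (cm θ))).re := by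
        rw [← Complex.conj_re]; simp
      rw [this]; ring
    have h2 : ∫ θ, ((starRingEnd ℂ (f 0)) * (cm θ * g (cm θ))).re ∂nu = 0 := by
      have h3 := mean_value (f := fun z => (starRingEnd ℂ (f 0)) * (z * g z)) (by fun_prop)
      have h4 := integral_re (𝕜 := ℂ) (μ := nu) (f := fun θ => (starRingEnd ℂ (f 0)) * (cm θ * g (cm θ)))
        (integrable_nu (by fun_prop))
      simp only [RCLike.re_to_complex] at h4
      rw [h4, h3]; simp
    simp_rw [h1]
    rw [integral_add (integrable_nu (by fun_prop)) (integrable_nu (by fun_prop)),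
      integral_add (integrable_nu (by fun_prop)) (integrable_nu (by fun_prop)), integral_const_mul, h2]
    simp [hK]
  have hKB : K ≤ B + |‖f 0‖ ^ 2 - 1| := by
    have : ∫ θ, (‖f (cm θ)‖ ^ 2 - 1) ∂nu ≤ B :=
      integral_mono (integrable_nu (by fun_prop)) (integrable_nu (by fun_prop)) (fun θ => le_abs_self _)
    have := neg_abs_le (‖f 0‖ ^ 2 - 1)
    linarith
  constructor
  · refine le_trans ?_ hKB
    set t := ‖deriv f 0‖ with ht
    have h1 : t ≤ ∫ θ, ‖g (cm θ)‖ ∂nu := by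
      rw [ht, ← hg0, ← mean_value hg]
      exact norm_integral_le_integral_norm _
    have h2 : ∫ θ, (2 * t * ‖g (cm θ)‖) ∂nu ≤ ∫ θ, (‖g (cm θ)‖ ^ 2 + t ^ 2) ∂nu :=
      integral_mono (integrable_nu (by fun_prop)) (integrable_nu (by fun_prop))
        (fun θ => by dsimp only; nlinarith [sq_nonneg (‖g (cm θ)‖ - t)])
    rw [integral_const_mul, integral_add (integrable_nu (by fun_prop)) (integrable_nu (by fun_prop))] at h2
    simp only [integral_const, probReal_univ, one_smul] at h2
    have h0 : 0 ≤ t := norm_nonneg _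
    nlinarith
  · have hq := mean_value (f := fun z => (starRingEnd ℂ (f 0)) * (z ^ 2 * g z) + ((‖f 0‖ ^ 2 - 1 : ℝ) : ℂ) * z)
      (by fun_prop)
    simp only [mul_zero, zero_mul, ne_eq, OfNat.ofNat_ne_zero, not_false_eq_true, zero_pow, add_zero] at hq
    have hqc : ∫ θ, (starRingEnd ℂ) ((starRingEnd ℂ (f 0)) * (cm θ ^ 2 * g (cm θ))
        + ((‖f 0‖ ^ 2 - 1 : ℝ) : ℂ) * cm θ) ∂nu = 0 := by
      rw [integral_conj, hq, map_zero]
    have h1 : ∀ θ, (starRingEnd ℂ (f 0)) * g (cm θ) =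
        ((starRingEnd ℂ (cm θ)) * ((‖f (cm θ)‖ ^ 2 - 1 : ℝ) : ℂ)
          - (starRingEnd ℂ (cm θ)) * ((‖g (cm θ)‖ ^ 2 : ℝ) : ℂ))
        - (starRingEnd ℂ) ((starRingEnd ℂ (f 0)) * (cm θ ^ 2 * g (cm θ))
        + ((‖f 0‖ ^ 2 - 1 : ℝ) : ℂ) * cm θ) := by
      intro θ
      have hc : (starRingEnd ℂ (cm θ)) * cm θ = 1 := by
        rw [Complex.conj_mul', norm_cm]; simp
      have e1 : ((‖f (cm θ)‖ ^ 2 - 1 : ℝ) : ℂ) = (starRingEnd ℂ (f (cm θ))) * f (cm θ) - 1 := by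
        rw [Complex.conj_mul']; push_cast; ring
      have e2 : ((‖g (cm θ)‖ ^ 2 : ℝ) : ℂ) = (starRingEnd ℂ (g (cm θ))) * g (cm θ) := by
        rw [Complex.conj_mul']; push_cast; ring
      have e3 : ((‖f 0‖ ^ 2 - 1 : ℝ) : ℂ) = (starRingEnd ℂ (f 0)) * f 0 - 1 := by
        rw [Complex.conj_mul']; push_cast; ring
      rw [e1, e2, e3, hfg (cm θ)]
      simp only [map_add, map_mul, map_sub, map_pow, map_one, Complex.conj_conj]
      set c := cm θ
      set c' := (starRingEnd ℂ) c
      set G := g c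
      set G' := (starRingEnd ℂ) G
      set a := f 0
      set a' := (starRingEnd ℂ) a
      linear_combination (-a' * G - c' * G * G') * hc
    have h2 : (starRingEnd ℂ (f 0)) * deriv f 0 =
       ∫ θ, ((starRingEnd ℂ (cm θ)) * ((‖f (cm θ)‖ ^ 2 - 1 : ℝ) : ℂ)
          - (starRingEnd ℂ (cm θ)) * ((‖g (cm θ)‖ ^ 2 : ℝ) : ℂ)) ∂nu := by
      rw [← hg0, ← mean_value hg, ← integral_const_mul]
      simp_rw [h1]
      rw [integral_sub (integrable_nu ?_) (integrable_nu ?_), hqc, sub_zero]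
      · fun_prop
      · fun_prop
    have h3 : ‖f 0‖ * ‖deriv f 0‖ ≤ ∫ θ, (|‖f (cm θ)‖ ^ 2 - 1| + ‖g (cm θ)‖ ^ 2) ∂nu := by
      rw [← Complex.norm_conj, ← norm_mul, h2]
      refine (norm_integral_le_integral_norm _).trans ?_
      refine integral_mono (integrable_nu (by fun_prop)) (integrable_nu (by fun_prop)) (fun θ => ?_)
      dsimp only
      refine (norm_sub_le _ _).trans ?_
      rw [norm_mul, norm_mul, Complex.norm_conj, norm_cm, one_mul, one_mul, Complex.norm_real,
        Complex.norm_real, Real.norm_eq_abs, Real.norm_eq_abs, abs_of_nonneg (sq_nonneg ‖g (cm θ)‖)]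
    rw [integral_add (integrable_nu (by fun_prop)) (integrable_nu (by fun_prop))] at h3
    linarith

lemma integrable_prod_nu {E : Type*} [NormedAddCommGroup E] {f : ℂ × ℝ → E} (hf : Continuous f) (R : ℝ) :
    Integrable f ((volume.restrict (Metric.ball (0:ℂ) R)).prod nu) := by
  unfold nu
  rw [Measure.prod_smul_right, Measure.prod_restrict]
  refine Integrable.smul_measure ?_ ENNReal.ofReal_ne_top
  have : IntegrableOn f (Metric.closedBall (0:ℂ) R ×ˢ Set.Icc 0 (2 * Real.pi)) (volume.prod volume) :=
    hf.continuousOn.integrableOn_compact ((isCompact_closedBall _ _).prod isCompact_Icc)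
  exact this.mono_set (Set.prod_mono Metric.ball_subset_closedBall Set.Ioc_subset_Icc_self)

lemma intOn_ball {E : Type*} [NormedAddCommGroup E] {f : ℂ → E} (hf : Continuous f) (c : ℂ) (R : ℝ) :
    Integrable f (volume.restrict (Metric.ball c R)) :=
  (hf.continuousOn.integrableOn_compact (isCompact_closedBall c R)).mono_set Metric.ball_subset_closedBall

lemma swap_est {f : ℂ → ℝ} (hf : Continuous f) (h0 : ∀ z, 0 ≤ f z) :
    ∫ w in Metric.ball (0:ℂ) (1/2), ∫ θ, f (w + cm θ / 2) ∂nu ≤ ∫ w in Metric.ball (0:ℂ) 1, f w := by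
  have hcm := cm_cont
  rw [integral_integral_swap (f := fun w θ => f (w + cm θ / 2)) (integrable_prod_nu (by fun_prop) _)]
  have h1 : ∀ θ, ∫ w in Metric.ball (0:ℂ) (1/2), f (w + cm θ / 2) ≤ ∫ w in Metric.ball (0:ℂ) 1, f w := by
    intro θ
    have hmp := measurePreserving_add_right (volume : Measure ℂ) (cm θ / 2)
    have he : MeasurableEmbedding (fun w : ℂ => w + cm θ / 2) := (Homeomorph.addRight _).measurableEmbedding
    have := hmp.setIntegral_preimage_emb he f (Metric.ball (cm θ / 2) (1/2))
    have hpre : (fun w : ℂ => w + cm θ / 2) ⁻¹' (Metric.ball (cm θ / 2) (1/2)) = Metric.ball (0:ℂ) (1/2) := by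
      ext w; simp
    rw [hpre] at this
    rw [this]
    refine setIntegral_mono_set (intOn_ball hf 0 1) (Filter.Eventually.of_forall h0) ?_
    refine Filter.Eventually.of_forall (Metric.ball_subset_ball' (ε₁ := 1/2) (ε₂ := 1) (x := cm θ / 2) (y := 0) ?_)
    rw [dist_zero_right, norm_div, norm_cm]; norm_num
  calc _ ≤ ∫ θ, (∫ w in Metric.ball (0:ℂ) 1, f w) ∂nu := by
        refine integral_mono ?_ (integrable_const _) h1
        exact (integrable_prod_nu (f := fun p : ℂ × ℝ => f (p.1 + cm p.2 / 2)) (by fun_prop) _).integral_prod_right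
    _ = _ := by simp

lemma disc_mean {f : ℂ → ℂ} (hf : Differentiable ℂ f) :
    ‖f 0‖ * (volume.real (Metric.ball (0:ℂ) (1/2))) ≤ ∫ w in Metric.ball (0:ℂ) (1/2), ‖f w‖ := by
  have hcm := cm_cont
  have hc := hf.continuous
  have h1 : ∀ θ, ∫ w in Metric.ball (0:ℂ) (1/2), ‖f (cm θ * w)‖ = ∫ w in Metric.ball (0:ℂ) (1/2), ‖f w‖ := by
    intro θ
    let c : Circle := ⟨cm θ, by simp [Submonoid.unitSphere, norm_cm]⟩
    have hmp := (rotation c).measurePreserving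
    have := hmp.setIntegral_preimage_emb (rotation c).toHomeomorph.measurableEmbedding (fun w => ‖f w‖) (Metric.ball 0 (1/2))
    have hpre : (rotation c) ⁻¹' (Metric.ball 0 (1/2)) = Metric.ball (0:ℂ) (1/2) := by
      ext w
      rw [Set.mem_preimage, mem_ball_zero_iff, mem_ball_zero_iff, LinearIsometryEquiv.norm_map]
    rw [hpre] at this
    rw [← this]
    rfl
  have h2 : ∀ w, ‖f 0‖ ≤ ∫ θ, ‖f (cm θ * w)‖ ∂nu := by
    intro w
    have := mean_value (f := fun z => f (z * w)) (by fun_prop)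
    simp only [zero_mul] at this
    rw [← this]
    exact norm_integral_le_integral_norm _
  calc _ = ∫ w in Metric.ball (0:ℂ) (1/2), ‖f 0‖ := by simp [mul_comm]
    _ ≤ ∫ w in Metric.ball (0:ℂ) (1/2), ∫ θ, ‖f (cm θ * w)‖ ∂nu := by
        refine integral_mono (intOn_ball continuous_const _ _) ?_ h2
        exact (integrable_prod_nu (f := fun p : ℂ × ℝ => ‖f (cm p.2 * p.1)‖) (by fun_prop) _).integral_prod_left
    _ = ∫ θ, (∫ w in Metric.ball (0:ℂ) (1/2), ‖f w‖) ∂nu := by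
        rw [integral_integral_swap (f := fun w θ => ‖f (cm θ * w)‖) (integrable_prod_nu (by fun_prop) _)]
        simp_rw [h1]
    _ = _ := by simp

lemma vol_ball (R : ℝ) (hR : 0 ≤ R) : volume.real (Metric.ball (0:ℂ) R) = Real.pi * R ^ 2 := by
  rw [Measure.real, Complex.volume_ball]
  simp [hR, mul_comm]

lemma cs_ball {f : ℂ → ℝ} (hf : Continuous f) (R : ℝ) (hR : 0 < R) :
    (∫ w in Metric.ball (0:ℂ) R, f w) ^ 2 ≤ (Real.pi * R ^ 2) * ∫ w in Metric.ball (0:ℂ) R, f w ^ 2 := by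
  set V := Real.pi * R ^ 2 with hV
  have hVpos : 0 < V := by positivity
  set J1 := ∫ w in Metric.ball (0:ℂ) R, f w
  set J2 := ∫ w in Metric.ball (0:ℂ) R, f w ^ 2
  have h : ∀ t : ℝ, 2 * t * J1 ≤ J2 + V * t ^ 2 := by
    intro t
    have h1 : ∫ w in Metric.ball (0:ℂ) R, (2 * t * f w) ≤ ∫ w in Metric.ball (0:ℂ) R, (f w ^ 2 + t ^ 2) :=
      integral_mono (intOn_ball (by fun_prop) _ _) (intOn_ball (by fun_prop) _ _)
        (fun w => by dsimp only; nlinarith [sq_nonneg (f w - t)])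
    rw [integral_const_mul, integral_add (intOn_ball (by fun_prop) _ _) (intOn_ball (by fun_prop) _ _)] at h1
    simp only [integral_const, smul_eq_mul, measureReal_restrict_apply_univ] at h1
    rwa [vol_ball R hR.le] at h1
  have := h (J1 / V)
  have e : V * (J1 / V) ^ 2 = J1 ^ 2 / V := by field_simp
  have e2 : 2 * (J1 / V) * J1 = 2 * (J1 ^ 2 / V) := by field_simp
  rw [e, e2] at this
  have h3 : J1 ^ 2 / V ≤ J2 := by linarith
  rw [div_le_iff₀ hVpos] at h3
  linarith

lemma local_unit {F : ℂ → ℂ} (hF : Differentiable ℂ F) :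
    ‖deriv F 0‖ ^ 2 ≤ 10404 * ∫ w in Metric.ball (0:ℂ) 1, (‖F w‖ - 1) ^ 2 := by
  have hcm := cm_cont
  have hc := hF.continuous
  have hF' : Differentiable ℂ (deriv F) := hF.deriv
  have hc' := hF'.continuous
  set D := Metric.ball (0:ℂ) 1
  set D' := Metric.ball (0:ℂ) (1/2)
  have hDD : D' ⊆ D := Metric.ball_subset_ball (by norm_num)
  let Q : ℂ → ℝ := fun w => |‖F w‖ ^ 2 - 1|
  have hQ : Continuous Q := by fun_prop
  let B : ℂ → ℝ := fun w => ∫ θ, Q (w + cm θ / 2) ∂nu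
  set X := ∫ w in D, Q w with hX
  have hBint : Integrable B (volume.restrict D') :=
    (integrable_prod_nu (f := fun p : ℂ × ℝ => Q (p.1 + cm p.2 / 2)) (by fun_prop) _).integral_prod_left
  have hBX : ∫ w in D', B w ≤ X := swap_est hQ (fun z => abs_nonneg _)
  have hQX : ∫ w in D', Q w ≤ X :=
    setIntegral_mono_set (intOn_ball hQ 0 1) (Filter.Eventually.of_forall (fun z => abs_nonneg _))
      (Filter.Eventually.of_forall hDD)
  have hpt : ∀ w, ‖deriv F w‖ ^ 2 ≤ 4 * B w + 4 * Q w ∧ ‖F w‖ * ‖deriv F w‖ ≤ 4 * B w + 2 * Q w := by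
    intro w
    have hd : deriv (fun z => F (w + z / 2)) 0 = deriv F w / 2 := by
      have h1 : HasDerivAt (fun z : ℂ => w + z / 2) (1/2) 0 := by
        simpa using ((hasDerivAt_id (0:ℂ)).div_const 2).const_add w
      have h2 : HasDerivAt F (deriv F w) (w + 0 / 2) := by
        simpa using (hF w).hasDerivAt
      have := (h2.comp (0:ℂ) h1).deriv
      rw [Function.comp_def] at this
      rw [this]; ring
    have h := circle_est (f := fun z => F (w + z / 2)) (by fun_prop)
    rw [hd] at h
    simp only [zero_div, add_zero, norm_div, RCLike.norm_ofNat] at h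
    obtain ⟨ha, hb⟩ := h
    change _ ≤ B w + Q w at ha
    change _ ≤ 2 * B w + Q w at hb
    constructor <;> nlinarith
  set A1 := ∫ w in D', ‖deriv F w‖ with hA1
  set A2 := ∫ w in D', ‖deriv F w‖ ^ 2 with hA2
  set J1 := ∫ w in D, |‖F w‖ - 1| with hJ1
  set J2 := ∫ w in D, (‖F w‖ - 1) ^ 2 with hJ2
  have i4 : Integrable (fun w => 4 * B w) (volume.restrict D') := hBint.const_mul 4
  have hA2X : A2 ≤ 8 * X := by
    have : A2 ≤ ∫ w in D', (4 * B w + 4 * Q w) :=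
      integral_mono (intOn_ball (by fun_prop) _ _) (i4.add (intOn_ball (by fun_prop) _ _)) (fun w => (hpt w).1)
    rw [integral_add i4 (intOn_ball (by fun_prop) _ _), integral_const_mul, integral_const_mul] at this
    linarith
  have hFF : ∫ w in D', ‖F w‖ * ‖deriv F w‖ ≤ 6 * X := by
    have : ∫ w in D', ‖F w‖ * ‖deriv F w‖ ≤ ∫ w in D', (4 * B w + 2 * Q w) :=
      integral_mono (intOn_ball (by fun_prop) _ _) (i4.add (intOn_ball (by fun_prop) _ _)) (fun w => (hpt w).2)
    rw [integral_add i4 (intOn_ball (by fun_prop) _ _), integral_const_mul, integral_const_mul] at this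
    linarith
  have hJ2' : ∫ w in D', (‖F w‖ - 1) ^ 2 ≤ J2 :=
    setIntegral_mono_set (intOn_ball (by fun_prop) 0 1) (Filter.Eventually.of_forall (fun z => sq_nonneg _))
      (Filter.Eventually.of_forall hDD)
  have hA1X : A1 ≤ 10 * X + J2 / 2 := by
    have : A1 ≤ ∫ w in D', ((1/2) * ‖deriv F w‖ ^ 2 + (1/2) * (‖F w‖ - 1) ^ 2 + ‖F w‖ * ‖deriv F w‖) :=
      integral_mono (intOn_ball (by fun_prop) _ _) (intOn_ball (by fun_prop) _ _)
        (fun w => by dsimp only; nlinarith [sq_nonneg (‖deriv F w‖ + (‖F w‖ - 1))])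
    rw [integral_add (intOn_ball (by fun_prop) _ _) (intOn_ball (by fun_prop) _ _),
      integral_add (intOn_ball (by fun_prop) _ _) (intOn_ball (by fun_prop) _ _),
      integral_const_mul, integral_const_mul] at this
    linarith
  have hXJ : X ≤ J2 + 2 * J1 := by
    have : X ≤ ∫ w in D, ((‖F w‖ - 1) ^ 2 + 2 * |‖F w‖ - 1|) :=
      integral_mono (intOn_ball (by fun_prop) _ _) (intOn_ball (by fun_prop) _ _)
        (fun w => by
          change |‖F w‖ ^ 2 - 1| ≤ _
          have : ‖F w‖ ^ 2 - 1 = (‖F w‖ - 1) ^ 2 + 2 * (‖F w‖ - 1) := by ring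
          rw [this]
          refine (abs_add_le _ _).trans ?_
          rw [abs_mul, abs_of_nonneg (sq_nonneg _)]; simp)
    rw [integral_add (intOn_ball (by fun_prop) _ _) (intOn_ball (by fun_prop) _ _), integral_const_mul] at this
    exact this
  have hpi := Real.pi_le_four
  have hpi3 := Real.pi_gt_three
  have hJ20 : 0 ≤ J2 := integral_nonneg (fun w => sq_nonneg _)
  have hJ1J2 : J1 ^ 2 ≤ 4 * J2 := by
    have := cs_ball (f := fun w => |‖F w‖ - 1|) (by fun_prop) 1 one_pos
    simp only [sq_abs] at this
    change J1 ^ 2 ≤ _ * J2 at this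
    nlinarith
  have hA20 : 0 ≤ A2 := integral_nonneg (fun w => sq_nonneg _)
  have hA10 : 0 ≤ A1 := integral_nonneg (fun w => norm_nonneg _)
  have hA1A2 : A1 ^ 2 ≤ A2 := by
    have := cs_ball (f := fun w => ‖deriv F w‖) (by fun_prop) (1/2) (by norm_num)
    change A1 ^ 2 ≤ _ * A2 at this
    nlinarith
  have hm : ‖deriv F 0‖ ≤ 2 * A1 := by
    have := disc_mean hF'
    rw [vol_ball _ (by norm_num)] at this
    change _ ≤ A1 at this
    nlinarith [norm_nonneg (deriv F 0)]
  have hfin : A1 ^ 2 ≤ 2601 * J2 := by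
    obtain ⟨η, hη0, hη⟩ : ∃ η : ℝ, 0 ≤ η ∧ η ^ 2 = J2 := ⟨√J2, Real.sqrt_nonneg _, Real.sq_sqrt hJ20⟩
    have hJ1η : J1 ≤ 2 * η := by
      apply le_of_sq_le_sq _ (by positivity)
      nlinarith
    rcases le_total η 1 with h | h
    · have : A1 ≤ 51 * η := by nlinarith
      nlinarith
    · nlinarith
  nlinarith [norm_nonneg (deriv F 0)]


open scoped Pointwise in
lemma local_scaled {F : ℂ → ℂ} (hF : Differentiable ℂ F) (w : ℂ) {ρ : ℝ} (hρ : 0 < ρ) :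
    ‖deriv F w‖ ^ 2 * ρ ^ 4 ≤ 10404 * ∫ z in Metric.ball w ρ, (‖F z‖ - 1) ^ 2 := by
  have hd : deriv (fun z => F (w + (ρ:ℂ) * z)) 0 = deriv F w * ρ := by
    have h1 : HasDerivAt (fun z : ℂ => w + (ρ:ℂ) * z) (ρ:ℂ) 0 := by
      simpa using ((hasDerivAt_id (0:ℂ)).const_mul (ρ:ℂ)).const_add w
    have h2 : HasDerivAt F (deriv F w) (w + (ρ:ℂ) * 0) := by
      simpa using (hF w).hasDerivAt
    have := (h2.comp (0:ℂ) h1).deriv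
    rw [Function.comp_def] at this
    rw [this]
  have h := local_unit (F := fun z => F (w + (ρ:ℂ) * z)) (by fun_prop)
  rw [hd, norm_mul, Complex.norm_real, Real.norm_eq_abs, abs_of_pos hρ, mul_pow] at h
  have h1 := Measure.setIntegral_comp_smul_of_pos (volume : Measure ℂ)
    (fun z => (‖F (w + z)‖ - 1) ^ 2) (Metric.ball (0:ℂ) 1) hρ
  have h2 : ρ • Metric.ball (0:ℂ) 1 = Metric.ball 0 ρ := by
    rw [smul_ball hρ.ne']; simp [abs_of_pos hρ]
  have hmp := measurePreserving_add_left (volume : Measure ℂ) w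
  have he : MeasurableEmbedding (fun z : ℂ => w + z) := (Homeomorph.addLeft _).measurableEmbedding
  have h3 := hmp.setIntegral_preimage_emb he (fun z => (‖F z‖ - 1) ^ 2) (Metric.ball w ρ)
  have hpre : (fun z : ℂ => w + z) ⁻¹' (Metric.ball w ρ) = Metric.ball (0:ℂ) ρ := by
    ext z; simp
  rw [hpre] at h3
  rw [h2, h3] at h1
  simp only [Complex.real_smul, Complex.finrank_real_complex, smul_eq_mul] at h1
  rw [h1] at h
  have h4 := mul_le_mul_of_nonneg_right h (sq_nonneg ρ)
  have e : 10404 * ((ρ ^ 2)⁻¹ * ∫ z in Metric.ball w ρ, (‖F z‖ - 1) ^ 2) * ρ ^ 2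
      = 10404 * ∫ z in Metric.ball w ρ, (‖F z‖ - 1) ^ 2 := by field_simp
  rw [e] at h4
  calc _ = ‖deriv F w‖ ^ 2 * ρ ^ 2 * ρ ^ 2 := by ring
    _ ≤ _ := h4

lemma local_lint {F : ℂ → ℂ} (hF : Differentiable ℂ F) (w : ℂ) {ρ : ℝ} (hρ : 0 < ρ) :
    ENNReal.ofReal (‖deriv F w‖ ^ 2 * ρ ^ 4) ≤
      10404 * ∫⁻ z in Metric.ball w ρ, ENNReal.ofReal ((‖F z‖ - 1) ^ 2) := by
  have hc := hF.continuous
  rw [← ofReal_integral_eq_lintegral_ofReal (intOn_ball (by fun_prop) _ _)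
    (Filter.Eventually.of_forall (fun z => sq_nonneg _))]
  have : (10404 : ENNReal) = ENNReal.ofReal 10404 := by simp
  rw [this, ← ENNReal.ofReal_mul (by norm_num)]
  exact ENNReal.ofReal_le_ofReal (local_scaled hF w hρ)

/-- weight used in the Hardy inequality -/
noncomputable def kk (s : ℝ) : ℝ := 1 + |s| * Real.exp (s ^ 2 / 2)

lemma kk_cont : Continuous kk := by unfold kk; fun_prop
lemma kk_pos (s : ℝ) : 0 < kk s := by unfold kk; positivity

lemma int_kk {r : ℝ} (hr : 0 < r) : ∫ s in (0:ℝ)..r, kk s ≤ 2 * Real.exp (r ^ 2 / 2) := by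
  have h1 : ∫ s in (0:ℝ)..r, kk s = ∫ s in (0:ℝ)..r, (1 + s * Real.exp (s ^ 2 / 2)) := by
    apply intervalIntegral.integral_congr
    intro s hs
    rw [Set.uIcc_of_le hr.le] at hs
    simp only [kk, abs_of_nonneg hs.1]
  have h2 : ∫ s in (0:ℝ)..r, (1 + s * Real.exp (s ^ 2 / 2)) =
      (r + Real.exp (r ^ 2 / 2)) - (0 + Real.exp ((0:ℝ) ^ 2 / 2)) := by
    apply intervalIntegral.integral_eq_sub_of_hasDerivAt (f := fun s => s + Real.exp (s ^ 2 / 2))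
    · intro s _
      have : HasDerivAt (fun s : ℝ => s ^ 2 / 2) s s := by
        have := (hasDerivAt_pow 2 s).div_const 2
        simpa using this
      have := (hasDerivAt_id s).add this.exp
      rw [mul_comm s]
      exact this
    · exact (by fun_prop : Continuous _).intervalIntegrable _ _
  rw [h1, h2]
  have := Real.add_one_le_exp (r ^ 2 / 2)
  have h0 : Real.exp ((0:ℝ) ^ 2 / 2) = 1 := by simp
  rw [h0]
  nlinarith [sq_nonneg (r - 1)]

lemma cs_interval {g : ℝ → ℝ} (hg : Continuous g) {r : ℝ} (hr : 0 < r) :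
    (∫ s in (0:ℝ)..r, g s) ^ 2 ≤ (∫ s in (0:ℝ)..r, g s ^ 2 / kk s) * (2 * Real.exp (r ^ 2 / 2)) := by
  have hk := kk_cont
  have hkp := kk_pos
  have hk0 : ∀ s, kk s ≠ 0 := fun s => (hkp s).ne'
  set V := 2 * Real.exp (r ^ 2 / 2) with hV
  have hVpos : 0 < V := by positivity
  set J1 := ∫ s in (0:ℝ)..r, g s
  set J2 := ∫ s in (0:ℝ)..r, g s ^ 2 / kk s
  have hc2 : Continuous (fun s => g s ^ 2 / kk s) := by fun_prop (disch := exact hk0 _)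
  have h : ∀ t : ℝ, 2 * t * J1 ≤ J2 + V * t ^ 2 := by
    intro t
    have h1 : ∫ s in (0:ℝ)..r, (2 * t * g s) ≤ ∫ s in (0:ℝ)..r, (g s ^ 2 / kk s + t ^ 2 * kk s) := by
      apply intervalIntegral.integral_mono_on hr.le
      · exact (by fun_prop : Continuous _).intervalIntegrable _ _
      · exact (by fun_prop : Continuous _).intervalIntegrable _ _
      · intro s _
        have : g s ^ 2 / kk s + t ^ 2 * kk s - 2 * t * g s = (g s - t * kk s) ^ 2 / kk s := by
          have := hk0 s
          field_simp; ring
        have h5 : 0 ≤ (g s - t * kk s) ^ 2 / kk s := div_nonneg (sq_nonneg _) (hkp s).le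
        linarith
    rw [intervalIntegral.integral_const_mul, intervalIntegral.integral_add (hc2.intervalIntegrable _ _)
      ((by fun_prop : Continuous _).intervalIntegrable _ _), intervalIntegral.integral_const_mul] at h1
    have := int_kk hr
    nlinarith [sq_nonneg t]
  have := h (J1 / V)
  have e : V * (J1 / V) ^ 2 = J1 ^ 2 / V := by field_simp
  have e2 : 2 * (J1 / V) * J1 = 2 * (J1 ^ 2 / V) := by field_simp
  rw [e, e2] at this
  have h3 : J1 ^ 2 / V ≤ J2 := by linarith
  rwa [div_le_iff₀ hVpos] at h3

lemma radial_bound {F : ℂ → ℂ} (hF : Differentiable ℂ F) {e : ℂ} (he : ‖e‖ = 1) {r : ℝ} (hr : 0 < r) :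
    ‖F (r * e) - F 0‖ ≤ ∫ s in (0:ℝ)..r, ‖deriv F (s * e)‖ := by
  have hc' := hF.deriv.continuous
  have h : ∫ s in (0:ℝ)..r, deriv F (s * e) * e = F (r * e) - F ((0:ℝ) * e) := by
    apply intervalIntegral.integral_eq_sub_of_hasDerivAt (f := fun s : ℝ => F (s * e))
    · intro s _
      have h1 : HasDerivAt (fun z : ℂ => F (z * e)) (deriv F (s * e) * e) (s:ℂ) := by
        have h2 := (hF (s * e)).hasDerivAt
        have h3 : HasDerivAt (fun z : ℂ => z * e) e (s:ℂ) := by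
          simpa using (hasDerivAt_id (s:ℂ)).mul_const e
        exact h2.comp (s:ℂ) h3
      exact h1.comp_ofReal
    · exact (by fun_prop : Continuous _).intervalIntegrable _ _
  simp only [Complex.ofReal_zero, zero_mul] at h
  rw [← h]
  refine (intervalIntegral.norm_integral_le_integral_norm hr.le).trans (le_of_eq ?_)
  simp [he]

lemma tail_int (s : ℝ) (hs : 0 < s) :
    ∫⁻ r in Set.Ioi s, ENNReal.ofReal (2 * r * Real.exp (-(r ^ 2 / 2))) = ENNReal.ofReal (2 * Real.exp (-(s ^ 2 / 2))) := by
  have hd : ∀ r ∈ Set.Ici s, HasDerivAt (fun r : ℝ => -(2 * Real.exp (-(r ^ 2 / 2)))) (2 * r * Real.exp (-(r ^ 2 / 2))) r := by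
    intro r _
    have : HasDerivAt (fun s : ℝ => -(s ^ 2 / 2)) (-r) r := by
      have := ((hasDerivAt_pow 2 r).div_const 2).fun_neg
      simpa using this
    have h2 := (this.exp.const_mul 2).fun_neg
    have h3 : 2 * r * Real.exp (-(r ^ 2 / 2)) = -(2 * (Real.exp (-(r ^ 2 / 2)) * -r)) := by ring
    rw [h3]
    exact h2
  have hpos : ∀ r ∈ Set.Ioi s, 0 ≤ 2 * r * Real.exp (-(r ^ 2 / 2)) := by
    intro r hr
    have : 0 < r := hs.trans hr
    positivity
  have ht : Filter.Tendsto (fun r : ℝ => -(2 * Real.exp (-(r ^ 2 / 2)))) Filter.atTop (nhds 0) := by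
    have h1 : Filter.Tendsto (fun r : ℝ => r ^ 2 / 2) Filter.atTop Filter.atTop :=
      (Filter.tendsto_pow_atTop (two_ne_zero)).atTop_div_const (by norm_num)
    have h2 := (Real.tendsto_exp_neg_atTop_nhds_zero.comp h1).const_mul 2 |>.neg
    simpa [Function.comp_def] using h2
  have hi := integrableOn_Ioi_deriv_of_nonneg' hd hpos ht
  have hv := integral_Ioi_of_hasDerivAt_of_nonneg' hd hpos ht
  rw [← ofReal_integral_eq_lintegral_ofReal hi, hv]
  · simp
  · exact (ae_restrict_iff' measurableSet_Ioi).2 (Filter.Eventually.of_forall hpos)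

lemma weight_bound {s : ℝ} (hs : 0 < s) :
    2 * Real.exp (-(s ^ 2 / 2)) / kk s ≤ 4 * Real.exp (-s ^ 2) / (1 + s) := by
  rw [div_le_div_iff₀ (kk_pos s) (by positivity)]
  unfold kk
  rw [abs_of_pos hs]
  set E := Real.exp (s ^ 2 / 2) with hE
  have hEpos : 0 < E := Real.exp_pos _
  have h1 : Real.exp (-(s ^ 2 / 2)) = E⁻¹ := by rw [Real.exp_neg]
  have h2 : Real.exp (-s ^ 2) = E⁻¹ * E⁻¹ := by
    rw [← h1, ← Real.exp_add]; congr 1; ring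
  rw [h1, h2]
  have key : 2 * (1 + s) * E ≤ 4 * (1 + s * E) := by
    rcases le_total s 1 with h | h
    · have : E ≤ 2 := by
        have h3 : E ≤ Real.exp (1/2) := Real.exp_le_exp.2 (by nlinarith)
        have h4 : Real.exp (1/2) ^ 2 = Real.exp 1 := by rw [← Real.exp_nat_mul]; norm_num
        have := Real.exp_one_lt_d9
        nlinarith [Real.exp_pos (1/2)]
      nlinarith
    · nlinarith
  have e1 : 2 * E⁻¹ * (1 + s) = (2 * (1 + s) * E) * (E⁻¹ * E⁻¹) := by field_simp
  have e2 : 4 * (E⁻¹ * E⁻¹) * (1 + s * E) = (4 * (1 + s * E)) * (E⁻¹ * E⁻¹) := by ring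
  rw [e1, e2]
  exact mul_le_mul_of_nonneg_right key (by positivity)

lemma hardy {F : ℂ → ℂ} (hF : Differentiable ℂ F) {e : ℂ} (he : ‖e‖ = 1) :
    ∫⁻ r in Set.Ioi (0:ℝ), ENNReal.ofReal r * ENNReal.ofReal (‖F (r * e) - F 0‖ ^ 2 * Real.exp (-r ^ 2)) ≤
      ∫⁻ s in Set.Ioi (0:ℝ), ENNReal.ofReal (‖deriv F (s * e)‖ ^ 2 * (4 * Real.exp (-s ^ 2) / (1 + s))) := by
  have hc' := hF.deriv.continuous
  have hk := kk_cont
  have hkp := kk_pos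
  have hk0 : ∀ s, kk s ≠ 0 := fun s => (hkp s).ne'
  let q : ℝ → ℝ := fun s => ‖deriv F (s * e)‖ ^ 2 / kk s
  have hq : Continuous q := by
    have : Continuous (fun s : ℝ => ‖deriv F (s * e)‖ ^ 2) := by fun_prop
    exact this.div hk hk0
  have hq0 : ∀ s, 0 ≤ q s := fun s => div_nonneg (sq_nonneg _) (hkp s).le
  let T : Set (ℝ × ℝ) := {p | p.2 < p.1}
  have hT : MeasurableSet T := (isOpen_lt continuous_snd continuous_fst).measurableSet
  let H : ℝ → ℝ → ENNReal := fun r s => T.indicator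
    (fun p => ENNReal.ofReal (2 * p.1 * Real.exp (-(p.1 ^ 2 / 2))) * ENNReal.ofReal (q p.2)) (r, s)
  have hH : Measurable (Function.uncurry H) := by
    refine Measurable.indicator ?_ hT
    fun_prop
  have hstep : ∀ r ∈ Set.Ioi (0:ℝ), ENNReal.ofReal r * ENNReal.ofReal (‖F (r * e) - F 0‖ ^ 2 * Real.exp (-r ^ 2))
      ≤ ∫⁻ s in Set.Ioi (0:ℝ), H r s := by
    intro r hr
    have hr : 0 < r := hr
    have h1 : ∫⁻ s in Set.Ioi (0:ℝ), H r s = ENNReal.ofReal (2 * r * Real.exp (-(r ^ 2 / 2))) *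
        ∫⁻ s in Set.Ioo 0 r, ENNReal.ofReal (q s) := by
      rw [← lintegral_const_mul _ (by fun_prop)]
      have : ∀ s, H r s = (Set.Iio r).indicator
          (fun s => ENNReal.ofReal (2 * r * Real.exp (-(r ^ 2 / 2))) * ENNReal.ofReal (q s)) s := by
        intro s
        simp only [H, Set.indicator, T, Set.mem_ofPred_eq, Set.mem_Iio]
      simp_rw [this]
      rw [lintegral_indicator measurableSet_Iio, Measure.restrict_restrict measurableSet_Iio]
      congr 2
      ext x; simp [and_comm]
    have h2 : ∫⁻ s in Set.Ioo 0 r, ENNReal.ofReal (q s) = ENNReal.ofReal (∫ s in (0:ℝ)..r, q s) := by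
      rw [intervalIntegral.integral_of_le hr.le, ← integral_Ioc_eq_integral_Ioo.symm,
        ofReal_integral_eq_lintegral_ofReal]
      · exact (hq.integrableOn_Ioc).mono_set Set.Ioo_subset_Ioc_self
      · exact Filter.Eventually.of_forall hq0
    rw [h1, h2, ← ENNReal.ofReal_mul hr.le, ← ENNReal.ofReal_mul (by positivity)]
    apply ENNReal.ofReal_le_ofReal
    have h3 := radial_bound hF he hr
    have h4 := cs_interval (g := fun s : ℝ => ‖deriv F (s * e)‖) (by fun_prop) hr
    have h5 : ‖F (r * e) - F 0‖ ^ 2 ≤ (∫ s in (0:ℝ)..r, q s) * (2 * Real.exp (r ^ 2 / 2)) :=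
      le_trans (pow_le_pow_left₀ (norm_nonneg _) h3 2) h4
    have e1 : Real.exp (-(r ^ 2 / 2)) = Real.exp (r ^ 2 / 2) * Real.exp (-r ^ 2) := by
      rw [← Real.exp_add]; congr 1; ring
    calc r * (‖F (r * e) - F 0‖ ^ 2 * Real.exp (-r ^ 2))
        ≤ r * ((∫ s in (0:ℝ)..r, q s) * (2 * Real.exp (r ^ 2 / 2)) * Real.exp (-r ^ 2)) := by gcongr
      _ = _ := by rw [e1]; ring
  calc _ ≤ ∫⁻ r in Set.Ioi (0:ℝ), ∫⁻ s in Set.Ioi (0:ℝ), H r s := setLIntegral_mono' measurableSet_Ioi hstep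
    _ = ∫⁻ s in Set.Ioi (0:ℝ), ∫⁻ r in Set.Ioi (0:ℝ), H r s := lintegral_lintegral_swap hH.aemeasurable
    _ ≤ _ := by
      refine setLIntegral_mono' measurableSet_Ioi (fun s hs => ?_)
      have hs : 0 < s := hs
      have h1 : ∫⁻ r in Set.Ioi (0:ℝ), H r s = ∫⁻ r in Set.Ioi s, ENNReal.ofReal (2 * r * Real.exp (-(r ^ 2 / 2)))
          * ENNReal.ofReal (q s) := by
        have : ∀ r, H r s = (Set.Ioi s).indicator
            (fun r => ENNReal.ofReal (2 * r * Real.exp (-(r ^ 2 / 2))) * ENNReal.ofReal (q s)) r := by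
          intro r
          simp only [H, Set.indicator, T, Set.mem_ofPred_eq, Set.mem_Ioi]
        simp_rw [this]
        rw [lintegral_indicator measurableSet_Ioi, Measure.restrict_restrict measurableSet_Ioi]
        congr 2
        ext x; simp only [Set.mem_inter_iff, Set.mem_Ioi]
        exact ⟨fun h => h.1, fun h => ⟨h, hs.trans h⟩⟩
      rw [h1, lintegral_mul_const _ (by fun_prop), tail_int s hs, ← ENNReal.ofReal_mul (by positivity)]
      apply ENNReal.ofReal_le_ofReal
      have := weight_bound hs
      calc _ = ‖deriv F (s * e)‖ ^ 2 * (2 * Real.exp (-(s ^ 2 / 2)) / kk s) := by simp only [q]; ring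
        _ ≤ _ := by gcongr


/-- the target of polar coordinates -/
def TT : Set (ℝ × ℝ) := Set.Ioi (0:ℝ) ×ˢ Set.Ioo (-Real.pi) Real.pi

/-- polar coordinates -/
noncomputable def pc (p : ℝ × ℝ) : ℂ := p.1 * (Real.cos p.2 + Real.sin p.2 * Complex.I)

lemma pc_cont : Continuous pc := by unfold pc; fun_prop

lemma TT_meas : MeasurableSet TT := measurableSet_Ioi.prod measurableSet_Ioo

lemma norm_e (θ : ℝ) : ‖((Real.cos θ : ℂ) + Real.sin θ * Complex.I)‖ = 1 := by
  have := Complex.norm_exp_ofReal_mul_I θ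
  rwa [Complex.exp_mul_I, ← Complex.ofReal_cos, ← Complex.ofReal_sin] at this

lemma norm_pc {p : ℝ × ℝ} (hp : p ∈ TT) : ‖pc p‖ = p.1 := by
  have : 0 < p.1 := hp.1
  rw [pc, norm_mul, norm_e, mul_one, Complex.norm_real, Real.norm_eq_abs, abs_of_pos this]

lemma polar (f : ℂ → ENNReal) : ∫⁻ p in TT, ENNReal.ofReal p.1 * f (pc p) = ∫⁻ z, f z := by
  rw [← Complex.lintegral_comp_polarCoord_symm f]
  simp only [smul_eq_mul, Complex.polarCoord_symm_apply]
  rfl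

/-- the interaction region -/
def SS (z : ℂ) : Set ℂ := {w | ‖z - w‖ * (1 + ‖w‖) < 1}

lemma SS_meas (z : ℂ) : MeasurableSet (SS z) :=
  (isOpen_lt (by fun_prop : Continuous fun w : ℂ => ‖z - w‖ * (1 + ‖w‖)) continuous_const).measurableSet

lemma SS_dist {z w : ℂ} (h : w ∈ SS z) : ‖z - w‖ < 1 := by
  have h : ‖z - w‖ * (1 + ‖w‖) < 1 := h
  nlinarith [norm_nonneg (z - w), norm_nonneg w, mul_nonneg (norm_nonneg (z - w)) (norm_nonneg w)]

lemma SS_exp {z w : ℂ} (h : w ∈ SS z) : Real.exp (-‖w‖ ^ 2) ≤ Real.exp 2 * Real.exp (-‖z‖ ^ 2) := by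
  have h1 := SS_dist h
  have h : ‖z - w‖ * (1 + ‖w‖) < 1 := h
  rw [← Real.exp_add]
  apply Real.exp_le_exp.2
  have h2 := norm_sub_norm_le z w
  have h3 := norm_nonneg w
  have h4 := norm_nonneg z
  have h5 := norm_nonneg (z - w)
  have h6 : (‖z‖ - ‖w‖) * (‖z‖ + ‖w‖) ≤ ‖z - w‖ * (1 + 2 * ‖w‖) :=
    mul_le_mul h2 (by linarith) (by positivity) h5
  nlinarith

lemma area_est (z : ℂ) : ∫⁻ w, (SS z).indicator (fun w => ENNReal.ofReal (‖w‖ ^ 2)) w ≤ ENNReal.ofReal (4 * Real.pi) := by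
  have hz := norm_nonneg z
  have hp : 0 < 1 + ‖z‖ := by positivity
  calc _ ≤ ∫⁻ w, (Metric.ball z (2 / (1 + ‖z‖))).indicator (fun _ => ENNReal.ofReal ((1 + ‖z‖) ^ 2)) w := by
        refine lintegral_mono (fun w => ?_)
        by_cases hw : w ∈ SS z
        · have h1 := SS_dist hw
          have hw' : ‖z - w‖ * (1 + ‖w‖) < 1 := hw
          have h2 := norm_sub_norm_le z w
          have h3 : ‖w‖ - ‖z‖ ≤ ‖z - w‖ := by rw [norm_sub_rev]; exact norm_sub_norm_le w z
          have h4 := norm_nonneg (z - w)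
          have hmem : w ∈ Metric.ball z (2 / (1 + ‖z‖)) := by
            rw [Metric.mem_ball, dist_comm, dist_eq_norm, lt_div_iff₀ hp]
            nlinarith [norm_nonneg w]
          rw [Set.indicator_of_mem hw, Set.indicator_of_mem hmem]
          apply ENNReal.ofReal_le_ofReal
          have := norm_nonneg w
          apply pow_le_pow_left₀ this
          linarith
        · rw [Set.indicator_of_notMem hw]; exact zero_le
    _ = ENNReal.ofReal (4 * Real.pi) := by
        rw [lintegral_indicator_const Metric.isOpen_ball.measurableSet, Complex.volume_ball,
          ← ENNReal.ofReal_pow (by positivity)]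
        have : (NNReal.pi : ENNReal) = ENNReal.ofReal Real.pi := by
          rw [← NNReal.coe_real_pi, ENNReal.ofReal_coe_nnreal]
        rw [this, ← ENNReal.ofReal_mul (by positivity), ← ENNReal.ofReal_mul (by positivity)]
        congr 1
        field_simp; norm_num

lemma strip_est (z : ℂ) : ∫⁻ p in TT, (SS z).indicator (fun _ => (1 : ENNReal)) (pc p) ≤ ENNReal.ofReal (4 * Real.pi) := by
  let R : Set (ℝ × ℝ) := Set.Ioo (‖z‖ - 1) (‖z‖ + 1) ×ˢ Set.Ioo (-Real.pi) Real.pi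
  calc _ ≤ ∫⁻ p in TT, R.indicator (fun _ => (1 : ENNReal)) p := by
        refine setLIntegral_mono' TT_meas (fun p hp => ?_)
        by_cases hw : pc p ∈ SS z
        · have h1 := SS_dist hw
          have h2 := norm_sub_norm_le z (pc p)
          have h3 : ‖pc p‖ - ‖z‖ ≤ ‖z - pc p‖ := by rw [norm_sub_rev]; exact norm_sub_norm_le _ z
          rw [norm_pc hp] at h2 h3
          have hm : p ∈ R := ⟨⟨by linarith, by linarith⟩, hp.2⟩
          rw [Set.indicator_of_mem hw, Set.indicator_of_mem hm]
        · rw [Set.indicator_of_notMem hw]; exact zero_le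
    _ ≤ ∫⁻ p, R.indicator (fun _ => (1 : ENNReal)) p := setLIntegral_le_lintegral _ _
    _ = ENNReal.ofReal (4 * Real.pi) := by
        rw [lintegral_indicator_const (measurableSet_Ioo.prod measurableSet_Ioo), one_mul,
          Measure.volume_eq_prod, Measure.prod_prod, Real.volume_Ioo, Real.volume_Ioo,
          ← ENNReal.ofReal_mul (by linarith)]
        congr 1; ring

lemma Phi_est (z : ℂ) :
    ∫⁻ p in TT, (SS z).indicator (fun w => ENNReal.ofReal (4 * Real.exp (-‖w‖ ^ 2) * (1 + ‖w‖) ^ 3)) (pc p) ≤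
      ENNReal.ofReal (128 * Real.pi * Real.exp 2) * ENNReal.ofReal (Real.exp (-‖z‖ ^ 2)) := by
  set c : ENNReal := ENNReal.ofReal (16 * Real.exp 2) * ENNReal.ofReal (Real.exp (-‖z‖ ^ 2)) with hc
  have hmeas : Measurable (fun p => (SS z).indicator (fun _ => (1 : ENNReal)) (pc p)) :=
    (measurable_const.indicator (SS_meas z)).comp pc_cont.measurable
  have hmeas2 : Measurable (fun p : ℝ × ℝ => ENNReal.ofReal p.1 * (SS z).indicator (fun w => ENNReal.ofReal (‖w‖ ^ 2)) (pc p)) := by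
    refine Measurable.mul (by fun_prop) ?_
    exact ((by fun_prop : Measurable (fun w : ℂ => ENNReal.ofReal (‖w‖ ^ 2))).indicator (SS_meas z)).comp pc_cont.measurable
  calc _ ≤ ∫⁻ p in TT, c * ((SS z).indicator (fun _ => (1 : ENNReal)) (pc p) +
            ENNReal.ofReal p.1 * (SS z).indicator (fun w => ENNReal.ofReal (‖w‖ ^ 2)) (pc p)) := by
        refine setLIntegral_mono' TT_meas (fun p hp => ?_)
        by_cases hw : pc p ∈ SS z
        · rw [Set.indicator_of_mem hw, Set.indicator_of_mem hw, Set.indicator_of_mem hw]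
          have h1 := SS_exp hw
          rw [norm_pc hp] at h1 ⊢
          have hp0 : 0 < p.1 := hp.1
          rw [hc, ← ENNReal.ofReal_mul (by positivity), ← ENNReal.ofReal_mul (by positivity), ← ENNReal.ofReal_one,
            ← ENNReal.ofReal_add (by positivity) (by positivity), ← ENNReal.ofReal_mul (by positivity)]
          apply ENNReal.ofReal_le_ofReal
          have h2 : (1 + p.1) ^ 3 ≤ 4 * (1 + p.1 * p.1 ^ 2) := by
            nlinarith [mul_nonneg (by positivity : 0 ≤ 1 + p.1) (sq_nonneg (p.1 - 1))]
          calc 4 * Real.exp (-p.1 ^ 2) * (1 + p.1) ^ 3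
              ≤ 4 * (Real.exp 2 * Real.exp (-‖z‖ ^ 2)) * (4 * (1 + p.1 * p.1 ^ 2)) := by gcongr
            _ = _ := by ring
        · rw [Set.indicator_of_notMem hw]; exact zero_le
    _ = c * ((∫⁻ p in TT, (SS z).indicator (fun _ => (1 : ENNReal)) (pc p)) +
          ∫⁻ w, (SS z).indicator (fun w => ENNReal.ofReal (‖w‖ ^ 2)) w) := by
        rw [lintegral_const_mul _ (by exact hmeas.add hmeas2), lintegral_add_left hmeas, polar]
    _ ≤ c * (ENNReal.ofReal (4 * Real.pi) + ENNReal.ofReal (4 * Real.pi)) := by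
        gcongr
        · exact strip_est z
        · exact area_est z
    _ = _ := by
        have := Real.pi_pos
        rw [hc, ← ENNReal.ofReal_add (by positivity) (by positivity), ← ENNReal.ofReal_mul (by positivity),
          ← ENNReal.ofReal_mul (by positivity), ← ENNReal.ofReal_mul (by positivity)]
        congr 1; ring


lemma one_dim_A {F : ℂ → ℂ} (hF : Differentiable ℂ F) :
    ∫⁻ z, ENNReal.ofReal (‖F z - F 0‖ ^ 2) * ENNReal.ofReal (Real.exp (-‖z‖ ^ 2)) ≤
      ∫⁻ p in TT, ENNReal.ofReal (‖deriv F (pc p)‖ ^ 2 * (4 * Real.exp (-p.1 ^ 2) / (1 + p.1))) := by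
  have hcF := hF.continuous
  have hc' := hF.deriv.continuous
  have hpc := pc_cont
  have hvol : (volume.restrict TT : Measure (ℝ × ℝ)) =
      (volume.restrict (Set.Ioi (0:ℝ))).prod (volume.restrict (Set.Ioo (-Real.pi) Real.pi)) := by
    rw [Measure.prod_restrict, TT, Measure.volume_eq_prod]
  calc ∫⁻ z, ENNReal.ofReal (‖F z - F 0‖ ^ 2) * ENNReal.ofReal (Real.exp (-‖z‖ ^ 2))
      = ∫⁻ p in TT, ENNReal.ofReal p.1 * ENNReal.ofReal (‖F (pc p) - F 0‖ ^ 2 * Real.exp (-p.1 ^ 2)) := by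
        rw [← polar]
        refine setLIntegral_congr_fun TT_meas (fun p hp => ?_)
        rw [norm_pc hp, ENNReal.ofReal_mul (sq_nonneg _)]
    _ = ∫⁻ θ in Set.Ioo (-Real.pi) Real.pi, ∫⁻ r in Set.Ioi (0:ℝ), ENNReal.ofReal r *
          ENNReal.ofReal (‖F (pc (r, θ)) - F 0‖ ^ 2 * Real.exp (-r ^ 2)) := by
        rw [hvol, lintegral_prod_symm]
        fun_prop
    _ ≤ ∫⁻ θ in Set.Ioo (-Real.pi) Real.pi, ∫⁻ s in Set.Ioi (0:ℝ),
          ENNReal.ofReal (‖deriv F (pc (s, θ))‖ ^ 2 * (4 * Real.exp (-s ^ 2) / (1 + s))) :=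
        lintegral_mono (fun θ => by
          have h := hardy hF (norm_e θ)
          simp only [pc]
          exact h)
    _ = ∫⁻ p in TT, ENNReal.ofReal (‖deriv F (pc p)‖ ^ 2 * (4 * Real.exp (-p.1 ^ 2) / (1 + p.1))) := by
        rw [hvol, lintegral_prod_symm]
        exact (by fun_prop : Measurable (fun p : ℝ × ℝ => ENNReal.ofReal (‖deriv F (pc p)‖ ^ 2 * (4 * Real.exp (-p.1 ^ 2) / (1 + p.1))))).aemeasurable

/-- weight -/
noncomputable def Wt (w : ℂ) : ENNReal := ENNReal.ofReal (4 * Real.exp (-‖w‖ ^ 2) * (1 + ‖w‖) ^ 3)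

lemma Wt_meas : Measurable Wt := by unfold Wt; fun_prop

lemma one_dim_B {F : ℂ → ℂ} (hF : Differentiable ℂ F) {U : ℂ → ENNReal}
    (hUF : U = fun z => ENNReal.ofReal ((‖F z‖ - 1) ^ 2)) (hU : Measurable U)
    {p : ℝ × ℝ} (hp : p ∈ TT) {K : ENNReal} (hK : K = 10404) :
    ENNReal.ofReal (‖deriv F (pc p)‖ ^ 2 * (4 * Real.exp (-p.1 ^ 2) / (1 + p.1))) ≤
      K * ∫⁻ z, (SS z).indicator Wt (pc p) * U z := by
  have hp0 : 0 < p.1 := hp.1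
  have h1 := local_lint hF (pc p) (ρ := 1 / (1 + p.1)) (by positivity)
  rw [← hK] at h1
  change _ ≤ K * ∫⁻ z in Metric.ball (pc p) (1 / (1 + p.1)), (fun z => ENNReal.ofReal ((‖F z‖ - 1) ^ 2)) z at h1
  rw [← hUF] at h1
  have h2 : ∀ z, (SS z).indicator Wt (pc p) * U z = Wt (pc p) * (Metric.ball (pc p) (1 / (1 + p.1))).indicator U z := by
    intro z
    have : pc p ∈ SS z ↔ z ∈ Metric.ball (pc p) (1 / (1 + p.1)) := by
      rw [Metric.mem_ball, dist_eq_norm, lt_div_iff₀ (by positivity)]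
      simp only [SS, Set.mem_ofPred_eq, norm_pc hp]
    by_cases h : pc p ∈ SS z
    · rw [Set.indicator_of_mem h, Set.indicator_of_mem (this.1 h)]
    · rw [Set.indicator_of_notMem h, Set.indicator_of_notMem (fun h' => h (this.2 h'))]; simp
  simp_rw [h2]
  rw [lintegral_const_mul _ (hU.indicator Metric.isOpen_ball.measurableSet),
    lintegral_indicator Metric.isOpen_ball.measurableSet]
  calc _ = Wt (pc p) * ENNReal.ofReal (‖deriv F (pc p)‖ ^ 2 * (1 / (1 + p.1)) ^ 4) := by
        simp only [Wt, norm_pc hp]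
        rw [← ENNReal.ofReal_mul (by positivity)]
        congr 1
        field_simp
    _ ≤ Wt (pc p) * (K * ∫⁻ z in Metric.ball (pc p) (1 / (1 + p.1)), U z) := by gcongr
    _ = _ := by ring

lemma one_dim_C {U : ℂ → ENNReal} (hU : Measurable U) (K : ENNReal) :
    ∫⁻ p in TT, K * ∫⁻ z, (SS z).indicator Wt (pc p) * U z =
      K * ∫⁻ z, (∫⁻ p in TT, (SS z).indicator Wt (pc p)) * U z := by
  have hpc := pc_cont
  have hWt := Wt_meas
  have hSS : MeasurableSet {x : ℂ × ℂ | x.1 ∈ SS x.2} :=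
    (isOpen_lt (by fun_prop : Continuous fun x : ℂ × ℂ => ‖x.2 - x.1‖ * (1 + ‖x.1‖)) continuous_const).measurableSet
  have hm : Measurable (fun x : (ℝ × ℝ) × ℂ => (SS x.2).indicator Wt (pc x.1) * U x.2) := by
    refine Measurable.mul ?_ (by fun_prop)
    have h3 : Measurable (fun x : ℂ × ℂ => {x : ℂ × ℂ | x.1 ∈ SS x.2}.indicator (fun x => Wt x.1) x) :=
      (hWt.comp measurable_fst).indicator hSS
    exact h3.comp ((hpc.measurable.comp measurable_fst).prodMk measurable_snd)
  rw [lintegral_const_mul]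
  · rw [lintegral_lintegral_swap (f := fun p z => (SS z).indicator Wt (pc p) * U z) hm.aemeasurable]
    congr 1
    refine lintegral_congr (fun z => ?_)
    rw [lintegral_mul_const]
    exact (hWt.indicator (SS_meas z)).comp hpc.measurable
  · exact hm.lintegral_prod_right'

/-- One-dimensional estimate. -/
lemma one_dim {F : ℂ → ℂ} (hF : Differentiable ℂ F) :
    ∫⁻ z, ENNReal.ofReal (‖F z - F 0‖ ^ 2) * ENNReal.ofReal (Real.exp (-‖z‖ ^ 2)) ≤
      (10404 * ENNReal.ofReal (128 * Real.pi * Real.exp 2)) *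
      ∫⁻ z, ENNReal.ofReal ((‖F z‖ - 1) ^ 2) * ENNReal.ofReal (Real.exp (-‖z‖ ^ 2)) := by
  have hcF := hF.continuous
  obtain ⟨K, hK⟩ : ∃ K : ENNReal, K = 10404 := ⟨_, rfl⟩
  rw [← hK]
  obtain ⟨U, hUF⟩ : ∃ U : ℂ → ENNReal, U = fun z => ENNReal.ofReal ((‖F z‖ - 1) ^ 2) := ⟨_, rfl⟩
  have hU : Measurable U := by rw [hUF]; fun_prop
  have hUz : ∀ z, ENNReal.ofReal ((‖F z‖ - 1) ^ 2) = U z := fun z => by rw [hUF]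
  simp_rw [hUz]
  refine (one_dim_A hF).trans ?_
  refine (setLIntegral_mono' TT_meas (fun p hp => one_dim_B hF hUF hU hp hK)).trans ?_
  rw [one_dim_C hU K, mul_assoc]
  refine mul_le_mul_right ?_ K
  rw [← lintegral_const_mul' _ _ ENNReal.ofReal_ne_top]
  refine lintegral_mono (fun z => ?_)
  refine (mul_le_mul_left (Phi_est z) (U z)).trans_eq ?_
  ring

/-- Gaussian weight -/
noncomputable def GG (d : ℕ) (z : Fin d → ℂ) : ENNReal := ENNReal.ofReal (Real.exp (-∑ q, ‖z q‖ ^ 2))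

lemma GG_meas (d : ℕ) : Measurable (GG d) := by unfold GG; fun_prop

lemma GG_cons (d : ℕ) (a : ℂ) (z : Fin d → ℂ) :
    GG (d+1) (Fin.cons a z) = ENNReal.ofReal (Real.exp (-‖a‖ ^ 2)) * GG d z := by
  unfold GG
  rw [← ENNReal.ofReal_mul (Real.exp_pos _).le, ← Real.exp_add, Fin.sum_univ_succ]
  simp only [Fin.cons_zero, Fin.cons_succ]
  congr 2
  ring

lemma cons_cont (d : ℕ) : Continuous (fun p : ℂ × (Fin d → ℂ) => (Fin.cons p.1 p.2 : Fin (d+1) → ℂ)) := by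
  refine continuous_pi (fun i => ?_)
  refine Fin.cases ?_ (fun j => ?_) i
  · simpa using continuous_fst
  · simp only [Fin.cons_succ]
    exact (continuous_apply j).comp continuous_snd

lemma fub (d : ℕ) {f : (Fin (d+1) → ℂ) → ENNReal} (hf : Measurable f) :
    ∫⁻ z, f z * GG (d+1) z =
      ∫⁻ z', (∫⁻ a : ℂ, f (Fin.cons a z') * ENNReal.ofReal (Real.exp (-‖a‖ ^ 2))) * GG d z' := by
  have hmp := (volume_preserving_piFinSuccAbove (fun _ : Fin (d+1) => ℂ) 0).symm
  have hG := GG_meas (d+1)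
  have hG' := GG_meas d
  have hcm := (cons_cont d).measurable
  have e : ∀ p : ℂ × (Fin d → ℂ), (MeasurableEquiv.piFinSuccAbove (fun _ : Fin (d+1) => ℂ) 0).symm p = Fin.cons p.1 p.2 := by
    intro p
    simp [MeasurableEquiv.piFinSuccAbove]
    rfl
  rw [← hmp.lintegral_comp (f := fun z => f z * GG (d+1) z) (hf.mul hG)]
  have hm : Measurable (fun p : ℂ × (Fin d → ℂ) => f (Fin.cons p.1 p.2) * ENNReal.ofReal (Real.exp (-‖p.1‖ ^ 2))) :=
    (hf.comp hcm).mul (by fun_prop)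
  have hm2 : Measurable (fun p : ℂ × (Fin d → ℂ) => f (Fin.cons p.1 p.2) * ENNReal.ofReal (Real.exp (-‖p.1‖ ^ 2)) * GG d p.2) :=
    hm.mul (hG'.comp measurable_snd)
  simp_rw [e, GG_cons, ← mul_assoc]
  rw [Measure.volume_eq_prod, lintegral_prod_symm _ hm2.aemeasurable]
  refine lintegral_congr (fun z' => ?_)
  dsimp only
  rw [lintegral_mul_const]
  exact hm.comp (measurable_id.prodMk measurable_const)

lemma sq_add_le (a b : ℝ) : ENNReal.ofReal ((a + b) ^ 2) ≤ 2 * ENNReal.ofReal (a ^ 2) + 2 * ENNReal.ofReal (b ^ 2) := by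
  have : (2 : ENNReal) = ENNReal.ofReal 2 := by simp
  rw [this, ← ENNReal.ofReal_mul (by norm_num), ← ENNReal.ofReal_mul (by norm_num),
    ← ENNReal.ofReal_add (by positivity) (by positivity)]
  apply ENNReal.ofReal_le_ofReal
  nlinarith [sq_nonneg (a - b)]

lemma norm_sq_le {x y b : ℝ} (hx : |x| ≤ y + b) :
    ENNReal.ofReal (x ^ 2) ≤ 2 * ENNReal.ofReal (y ^ 2) + 2 * ENNReal.ofReal (b ^ 2) := by
  refine le_trans (ENNReal.ofReal_le_ofReal ?_) (sq_add_le y b)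
  rw [← sq_abs]
  exact pow_le_pow_left₀ (abs_nonneg _) hx 2

lemma exists_phase (x : ℂ) : ∃ l : ℂ, ‖l‖ = 1 ∧ x = ‖x‖ * l := by
  by_cases h : x = 0
  · exact ⟨1, by simp, by simp [h]⟩
  · have h' : ‖x‖ ≠ 0 := norm_ne_zero_iff.2 h
    refine ⟨x / ‖x‖, by simp [h'], ?_⟩
    have : (‖x‖ : ℂ) ≠ 0 := by exact_mod_cast h'
    field_simp

theorem main_lint (d : ℕ) : ∃ C : NNReal, ∀ F : (Fin d → ℂ) → ℂ, Differentiable ℂ F →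
    ∃ l : ℂ, ‖l‖ = 1 ∧ ∫⁻ z, ENNReal.ofReal (‖F z - l‖ ^ 2) * GG d z ≤
      C * ∫⁻ z, ENNReal.ofReal ((‖F z‖ - 1) ^ 2) * GG d z := by
  induction d with
  | zero =>
    refine ⟨1, fun F hF => ?_⟩
    obtain ⟨l, hl, hFl⟩ := exists_phase (F 0)
    refine ⟨l, hl, ?_⟩
    rw [ENNReal.coe_one, one_mul]
    refine lintegral_mono (fun z => ?_)
    have hz : z = 0 := Subsingleton.elim _ _
    subst hz
    have : ‖F 0 - l‖ ^ 2 = (‖F 0‖ - 1) ^ 2 := by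
      have h1 : F 0 - l = ((‖F 0‖ - 1 : ℝ) : ℂ) * l := by
        push_cast
        linear_combination hFl
      rw [h1, norm_mul, hl, mul_one, Complex.norm_real, Real.norm_eq_abs, sq_abs]
    simp only [this, le_refl]
  | succ d ih =>
    obtain ⟨C, hC⟩ := ih
    let C1 : NNReal := 10404 * (Real.toNNReal (128 * Real.pi * Real.exp 2))
    refine ⟨2 * C1 + 2 * (C * (2 * C1 + 2)), fun F hF => ?_⟩
    let F0 : (Fin d → ℂ) → ℂ := fun z' => F (Fin.cons 0 z')
    have hcons : ∀ z' : Fin d → ℂ, Differentiable ℂ (fun a : ℂ => (Fin.cons a z' : Fin (d+1) → ℂ)) := by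
      intro z'
      rw [differentiable_pi]
      intro i
      refine Fin.cases ?_ (fun j => ?_) i
      · simp
      · simp
    have hF0 : Differentiable ℂ F0 := by
      refine hF.comp ?_
      rw [differentiable_pi]
      intro i
      refine Fin.cases ?_ (fun j => ?_) i
      · simp
      · simpa using differentiable_apply j
    obtain ⟨l, hl, hle⟩ := hC F0 hF0
    refine ⟨l, hl, ?_⟩
    have hcF := hF.continuous
    have hcF0 := hF0.continuous
    have hG := GG_meas (d+1)
    have htail : Continuous (fun z : Fin (d+1) → ℂ => (Fin.tail z : Fin d → ℂ)) :=
      continuous_pi (fun i => continuous_apply _)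
    have hcT : Continuous (fun z : Fin (d+1) → ℂ => F0 (Fin.tail z)) := hcF0.comp htail
    set A := ∫⁻ z, ENNReal.ofReal (‖F z - F0 (Fin.tail z)‖ ^ 2) * GG (d+1) z with hA
    set N := ∫⁻ z, ENNReal.ofReal ((‖F z‖ - 1) ^ 2) * GG (d+1) z with hN
    set κ := ∫⁻ a : ℂ, ENNReal.ofReal (Real.exp (-‖a‖ ^ 2)) with hκ
    have hAN : A ≤ C1 * N := by
      rw [hA, hN, fub d (by fun_prop), fub d (by fun_prop), ← lintegral_const_mul']
      · refine lintegral_mono (fun z' => ?_)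
        simp only [Fin.tail_cons]
        have h1 := one_dim (F := fun a => F (Fin.cons a z')) (hF.comp (hcons z'))
        have hC1 : (C1 : ENNReal) = 10404 * ENNReal.ofReal (128 * Real.pi * Real.exp 2) := by
          simp [C1, ENNReal.ofReal]
        rw [hC1, ← mul_assoc]
        gcongr
      · exact ENNReal.coe_ne_top
    have htl : ∀ h : (Fin d → ℂ) → ENNReal, Measurable h →
        ∫⁻ z, h (Fin.tail z) * GG (d+1) z = κ * ∫⁻ z', h z' * GG d z' := by
      intro h hh
      rw [fub d (f := fun z => h (Fin.tail z)) (hh.comp htail.measurable), ← lintegral_const_mul (f := fun z' => h z' * GG d z') _ (hh.mul (GG_meas d))]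
      refine lintegral_congr (fun z' => ?_)
      simp only [Fin.tail_cons]
      rw [lintegral_const_mul _ (by fun_prop)]
      ring
    have hsplit : ∀ f g h : (Fin (d+1) → ℂ) → ENNReal, Measurable g → (∀ z, f z ≤ 2 * g z + 2 * h z) →
        ∫⁻ z, f z * GG (d+1) z ≤ 2 * (∫⁻ z, g z * GG (d+1) z) + 2 * ∫⁻ z, h z * GG (d+1) z := by
      intro f g h hg hfgh
      rw [← lintegral_const_mul' _ _ (by simp), ← lintegral_const_mul' _ _ (by simp), ← lintegral_add_left]
      · refine lintegral_mono (fun z => ?_)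
        calc f z * GG (d+1) z ≤ (2 * g z + 2 * h z) * GG (d+1) z := by gcongr; exact hfgh z
          _ = _ := by ring
      · exact (hg.mul hG).const_mul _
    calc ∫⁻ z, ENNReal.ofReal (‖F z - l‖ ^ 2) * GG (d+1) z
        ≤ 2 * A + 2 * ∫⁻ z, ENNReal.ofReal (‖F0 (Fin.tail z) - l‖ ^ 2) * GG (d+1) z := by
          refine hsplit (fun z => ENNReal.ofReal (‖F z - l‖ ^ 2))
            (fun z => ENNReal.ofReal (‖F z - F0 (Fin.tail z)‖ ^ 2))
            (fun z => ENNReal.ofReal (‖F0 (Fin.tail z) - l‖ ^ 2)) (by fun_prop) (fun z => norm_sq_le ?_)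
          rw [abs_of_nonneg (norm_nonneg _)]
          exact norm_sub_le_norm_sub_add_norm_sub _ _ _
      _ = 2 * A + 2 * (κ * ∫⁻ z', ENNReal.ofReal (‖F0 z' - l‖ ^ 2) * GG d z') := by
          rw [htl (fun z' => ENNReal.ofReal (‖F0 z' - l‖ ^ 2)) (by fun_prop)]
      _ ≤ 2 * A + 2 * (κ * (C * ∫⁻ z', ENNReal.ofReal ((‖F0 z'‖ - 1) ^ 2) * GG d z')) := by gcongr
      _ = 2 * A + 2 * (C * ∫⁻ z, ENNReal.ofReal ((‖F0 (Fin.tail z)‖ - 1) ^ 2) * GG (d+1) z) := by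
          rw [htl (fun z' => ENNReal.ofReal ((‖F0 z'‖ - 1) ^ 2)) (by fun_prop)]
          ring
      _ ≤ 2 * A + 2 * (C * (2 * A + 2 * N)) := by
          gcongr
          refine hsplit (fun z => ENNReal.ofReal ((‖F0 (Fin.tail z)‖ - 1) ^ 2))
            (fun z => ENNReal.ofReal (‖F z - F0 (Fin.tail z)‖ ^ 2))
            (fun z => ENNReal.ofReal ((‖F z‖ - 1) ^ 2)) (by fun_prop) (fun z => ?_)
          rw [← sq_abs (‖F z‖ - 1)]
          refine norm_sq_le ?_
          have h1 : |‖F0 (Fin.tail z)‖ - ‖F z‖| ≤ ‖F z - F0 (Fin.tail z)‖ := by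
            rw [abs_sub_comm]; exact abs_norm_sub_norm_le _ _
          have h2 := abs_sub_le ‖F0 (Fin.tail z)‖ ‖F z‖ 1
          linarith
      _ ≤ 2 * (C1 * N) + 2 * (C * (2 * (C1 * N) + 2 * N)) := by gcongr
      _ = _ := by push_cast; ring

lemma gauss_integrable (d : ℕ) : Integrable (fun z : Fin d → ℂ => Real.exp (-∑ q, ‖z q‖ ^ 2)) := by
  have h1 : Integrable (fun z : ℂ => Real.exp (-‖z‖ ^ 2)) := by
    have := GaussianFourier.integrable_cexp_neg_mul_sq_norm_add (V := ℂ) (b := 1) (by simp) 0 0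
    have h2 := this.norm
    refine h2.congr (Filter.Eventually.of_forall (fun z => ?_))
    simp [Complex.norm_exp, ← Complex.ofReal_pow]
  have h2 := Integrable.fintype_prod (μ := fun _ : Fin d => (volume : Measure ℂ)) (f := fun _ z => Real.exp (-‖z‖ ^ 2)) (fun _ => h1)
  refine h2.congr (Filter.Eventually.of_forall (fun z => ?_))
  simp [← Real.exp_sum]

lemma int_eq {d : ℕ} {f : (Fin d → ℂ) → ℝ} (hf : Continuous f) :
    ∫ z, f z ^ 2 * Real.exp (-∑ q, ‖z q‖ ^ 2) = (∫⁻ z, ENNReal.ofReal (f z ^ 2) * GG d z).toReal := by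
  rw [integral_eq_lintegral_of_nonneg_ae]
  · congr 1
    refine lintegral_congr (fun z => ?_)
    rw [ENNReal.ofReal_mul (sq_nonneg _)]; rfl
  · exact Filter.Eventually.of_forall (fun z => by positivity)
  · exact (by fun_prop : Continuous fun z => f z ^ 2 * Real.exp (-∑ q, ‖z q‖ ^ 2)).aestronglyMeasurable

end Fock

/-- **Local stable phase retrieval at 1 in the Bargmann–Fock space over `ℂ^d`.**
For each `d ≥ 1` there exists `M = M_d > 0` such that every entire `F` with finite
Fock norm satisfies `inf_{|λ|=1} ‖F − λ·1‖_{F_d} ≤ M ‖|F| − 1‖_{F_d}`. -/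
theorem stmt14 (d : ℕ) (hd : 1 ≤ d) :
    ∃ M : ℝ, 0 < M ∧
      ∀ F : (Fin d → ℂ) → ℂ, Differentiable ℂ F →
        Integrable (fun z : Fin d → ℂ => ‖F z‖ ^ 2 * Real.exp (-∑ q, ‖z q‖ ^ 2)) →
        (⨅ θ : Metric.sphere (0 : ℂ) 1, gammaNormD d (fun z => F z - θ.1))
          ≤ M * gammaNormD d (fun z => ‖F z‖ - 1) := by
  obtain ⟨C, hC⟩ := Fock.main_lint d
  refine ⟨Real.sqrt (C + 1), by positivity, fun F hF hI => ?_⟩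
  obtain ⟨l, hl, hle⟩ := hC F hF
  have hcF := hF.continuous
  have hbdd : BddBelow (Set.range fun θ : Metric.sphere (0 : ℂ) 1 => gammaNormD d (fun z => F z - θ.1)) :=
    ⟨0, by rintro _ ⟨θ, rfl⟩; exact Real.sqrt_nonneg _⟩
  refine (ciInf_le hbdd ⟨l, by simpa using hl⟩).trans ?_
  unfold gammaNormD
  rw [← Real.sqrt_mul (by positivity)]
  apply Real.sqrt_le_sqrt
  have e1 := Fock.int_eq (f := fun z => ‖F z - l‖) (by fun_prop)
  have e2 := Fock.int_eq (f := fun z => ‖F z‖ - 1) (by fun_prop)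
  have hfin : ∫⁻ z, ENNReal.ofReal ((‖F z‖ - 1) ^ 2) * Fock.GG d z ≠ ⊤ := by
    have hi : Integrable (fun z : Fin d → ℂ => (‖F z‖ - 1) ^ 2 * Real.exp (-∑ q, ‖z q‖ ^ 2)) := by
      refine ((hI.const_mul 2).add ((Fock.gauss_integrable d).const_mul 2)).mono'
        (by fun_prop : Continuous fun z : Fin d → ℂ => (‖F z‖ - 1) ^ 2 * Real.exp (-∑ q, ‖z q‖ ^ 2)).aestronglyMeasurable
        (Filter.Eventually.of_forall (fun z => ?_))
      rw [Real.norm_eq_abs, abs_of_nonneg (by positivity)]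
      simp only [Pi.add_apply]
      have h1 : (‖F z‖ - 1) ^ 2 ≤ 2 * ‖F z‖ ^ 2 + 2 := by nlinarith [sq_nonneg (‖F z‖ + 1)]
      calc _ ≤ (2 * ‖F z‖ ^ 2 + 2) * Real.exp (-∑ q, ‖z q‖ ^ 2) := by gcongr
        _ = _ := by ring
    have h3 := hi.lintegral_lt_top
    refine ne_of_lt (lt_of_eq_of_lt ?_ h3)
    refine lintegral_congr (fun z => ?_)
    rw [ENNReal.ofReal_mul (sq_nonneg _)]; rfl
  simp only [Real.norm_eq_abs, sq_abs]
  rw [e1, e2]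
  have h4 := ENNReal.toReal_mono (ENNReal.mul_ne_top ENNReal.coe_ne_top hfin) hle
  rw [ENNReal.toReal_mul, ENNReal.coe_toReal] at h4
  set N := (∫⁻ z, ENNReal.ofReal ((‖F z‖ - 1) ^ 2) * Fock.GG d z).toReal
  have hN : 0 ≤ N := ENNReal.toReal_nonneg
  have hp : 0 ≤ 1 / Real.pi ^ d := by positivity
  calc _ ≤ 1 / Real.pi ^ d * (C * N) := by gcongr
    _ ≤ 1 / Real.pi ^ d * ((C + 1) * N) := by gcongr; linarith
    _ = _ := by ring
end
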